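/- Every finite simple connected graph in which each block is a cycle, a single edge, or a biconnected chordal graph satisfies the substructure property. -/

import Mathlib

open SimpleGraph

namespace EVC

variable {V : Type}

/-- `S` is a vertex cover of `G`. -/
def IsCover (G : SimpleGraph V) (S : Set V) : Prop :=
  ∀ ⦃u v : V⦄, G.Adj u v → u ∈ S ∨ v ∈ S

/-- A valid movement of guards from configuration `C` to configuration `C'`, witnessed by a
multiset `M` of (source, target) pairs (a bijection between the two multisets of guards):
every guard either stays in place or moves to an adjacent vertex. -/
def ValidMove (G : SimpleGraph V) (C C' : Multiset V) (M : Multiset (V × V)) : Prop :=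
  M.map Prod.fst = C ∧ M.map Prod.snd = C' ∧ ∀ p ∈ M, p.1 = p.2 ∨ G.Adj p.1 p.2

/-- A defense strategy on `G` with `k` guards: a nonempty family of vertex-cover
configurations of size `k` such that any attack on an edge can be defended by a valid
move staying within the family. -/
def IsDefense (G : SimpleGraph V) (k : ℕ) (F : Set (Multiset V)) : Prop :=
  F.Nonempty ∧
  (∀ C ∈ F, Multiset.card C = k ∧ IsCover G {v | v ∈ C}) ∧
  (∀ C ∈ F, ∀ u v : V, G.Adj u v →
    ∃ C' ∈ F, ∃ M : Multiset (V × V), ValidMove G C C' M ∧ ((u, v) ∈ M ∨ (v, u) ∈ M))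

/-- The eternal vertex cover number of `G`. -/
noncomputable def evc (G : SimpleGraph V) : ℕ :=
  sInf {k | ∃ F : Set (Multiset V), IsDefense G k F}

/-- `evc_S(G)`: the minimum number of guards of a defense strategy on `G` in which every
vertex of `S` is occupied in every configuration. -/
noncomputable def evcOn (G : SimpleGraph V) (S : Set V) : ℕ :=
  sInf {k | ∃ F : Set (Multiset V), IsDefense G k F ∧ ∀ C ∈ F, ∀ s ∈ S, s ∈ C}

/-- `C` is an eternal vertex cover configuration of `G`: it belongs to some defense strategy. -/
def IsEvcConfig (G : SimpleGraph V) (C : Multiset V) : Prop :=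
  ∃ (k : ℕ) (F : Set (Multiset V)), IsDefense G k F ∧ C ∈ F

open Classical in
/-- The number of guards of configuration `C` that lie in the set `S`. -/
noncomputable def guardsOn (C : Multiset V) (S : Set V) : ℕ :=
  Multiset.card (C.filter (fun v => v ∈ S))

/-- `G_x^+`: the graph `G` together with one new vertex (`none`) adjacent only to `x`. -/
def addPendant (G : SimpleGraph V) (x : V) : SimpleGraph (Option V) :=
  SimpleGraph.fromRel (fun a b =>
    (∃ u w : V, a = some u ∧ b = some w ∧ G.Adj u w) ∨ (a = none ∧ b = some x))

/-- The induced subgraph of `G` obtained by deleting the vertex `x`. -/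
abbrev delVert (G : SimpleGraph V) (x : V) : SimpleGraph {v : V | v ≠ x} :=
  G.induce {v : V | v ≠ x}

/-- `x` is a cut vertex of `G`: deleting `x` separates two vertices that were connected. -/
def IsCutVertex (G : SimpleGraph V) (x : V) : Prop :=
  ∃ (u v : V) (hu : u ≠ x) (hv : v ≠ x), G.Reachable u v ∧
    ¬ (delVert G x).Reachable ⟨u, hu⟩ ⟨v, hv⟩

/-- `G` is Type 1 with respect to `x`: `evc(G_x^+) = evc_x(G)`. -/
def Type1 (G : SimpleGraph V) (x : V) : Prop := evc (addPendant G x) = evcOn G {x}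

/-- `G` is Type 2 with respect to `x`: `evc(G_x^+) > evc_x(G)`. -/
def Type2 (G : SimpleGraph V) (x : V) : Prop := evcOn G {x} < evc (addPendant G x)

/-- The vertex set of the `x`-component of `G` corresponding to the connected component `H`
of `G − x`: the vertices of `H` together with `x`. -/
def xCompSet (G : SimpleGraph V) (x : V) (H : (delVert G x).ConnectedComponent) : Set V :=
  insert x (Subtype.val '' H.supp)

lemma x_mem_xCompSet (G : SimpleGraph V) (x : V) (H : (delVert G x).ConnectedComponent) :
    x ∈ xCompSet G x H := Set.mem_insert _ _

/-- `evc_x(G_i)` for the `x`-component `G_i` of `G` corresponding to `H`. -/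
noncomputable def evcComp (G : SimpleGraph V) (x : V)
    (H : (delVert G x).ConnectedComponent) : ℕ :=
  evcOn (G.induce (xCompSet G x H)) {(⟨x, x_mem_xCompSet G x H⟩ : ↥(xCompSet G x H))}

/-- The `x`-component of `G` corresponding to `H` is Type 1 with respect to `x`. -/
def CompType1 (G : SimpleGraph V) (x : V) (H : (delVert G x).ConnectedComponent) : Prop :=
  Type1 (G.induce (xCompSet G x H)) ⟨x, x_mem_xCompSet G x H⟩

/-- The `x`-component of `G` corresponding to `H` is Type 2 with respect to `x`. -/
def CompType2 (G : SimpleGraph V) (x : V) (H : (delVert G x).ConnectedComponent) : Prop :=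
  Type2 (G.induce (xCompSet G x H)) ⟨x, x_mem_xCompSet G x H⟩

/-- The substructure property: for every non-cut vertex `x` of `G` and every `x`-extension
`G'` of `G` (i.e. every connected graph `G'` having `G` as an `x`-component, via an
isomorphism `φ` identifying `x` with a cut vertex `x'` of `G'`), every eternal vertex cover
configuration of `G'` has at least `evc_x(G) − 1` guards on the copy of `V(G)` in case
`evc(G_x^+) ≤ evc_x(G)`, and at least `evc_x(G)` guards on it in case
`evc(G_x^+) > evc_x(G)`. -/
def SubstructureProperty (G : SimpleGraph V) : Prop :=
  ∀ x : V, ¬ IsCutVertex G x →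
  ∀ (V' : Type) [Finite V'], ∀ (G' : SimpleGraph V') (x' : V'),
    G'.Connected → IsCutVertex G' x' →
  ∀ (H : (delVert G' x').ConnectedComponent) (φ : G ≃g G'.induce (xCompSet G' x' H)),
    (φ x : ↥(xCompSet G' x' H)).1 = x' →
  ∀ C' : Multiset V', IsEvcConfig G' C' →
    (evc (addPendant G x) ≤ evcOn G {x} →
        evcOn G {x} - 1 ≤ guardsOn C' (xCompSet G' x' H)) ∧
    (evcOn G {x} < evc (addPendant G x) →
        evcOn G {x} ≤ guardsOn C' (xCompSet G' x' H))

/-- The `x`-component corresponding to `H` is edge-disjoint from (the induced subgraph on)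
the vertex set `S`. -/
def EdgeDisjointComp (G : SimpleGraph V) (S : Set V) (x : V)
    (H : (delVert G x).ConnectedComponent) : Prop :=
  ∀ u v : V, G.Adj u v → u ∈ S → v ∈ S →
    ¬(u ∈ xCompSet G x H ∧ v ∈ xCompSet G x H)

/-- The components attached to the vertex set `S` (of a block or a path): pairs `(x, H)`
with `x ∈ X ∩ S` a cut vertex on `S` and `H` a component of `G − x` whose `x`-component
is edge-disjoint from `S`. -/
def SComponents (G : SimpleGraph V) (X S : Set V) :
    Set (Σ x : V, (delVert G x).ConnectedComponent) :=
  {p | p.1 ∈ X ∧ p.1 ∈ S ∧ EdgeDisjointComp G S p.1 p.2}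

/-- `χ(G, S)` where `S` is the vertex set of a block or a path of `G` and `X` is the set
of cut vertices of `G`. -/
noncomputable def chi (G : SimpleGraph V) (X S : Set V) : ℕ :=
  Nat.card ↥(S ∩ X)
    + ∑ᶠ p ∈ {p ∈ SComponents G X S | CompType1 G p.1 p.2}, (evcComp G p.1 p.2 - 2)
    + ∑ᶠ p ∈ {p ∈ SComponents G X S | CompType2 G p.1 p.2}, (evcComp G p.1 p.2 - 1)

/-- The set `S` induces a block of `G`: a maximal (vertex set of a) connected induced
subgraph having no cut vertex. -/
def IsBlock (G : SimpleGraph V) (S : Set V) : Prop :=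
  (G.induce S).Connected ∧ (∀ y : ↥S, ¬ IsCutVertex (G.induce S) y) ∧
  ∀ T : Set V, S ⊆ T → (G.induce T).Connected →
    (∀ y : ↥T, ¬ IsCutVertex (G.induce T) y) → T ⊆ S

/-- The induced subgraph of `G` on `S` is a cycle: there is a chordless cycle of `G` whose
vertex set is exactly `S`. -/
def IsCycleSet (G : SimpleGraph V) (S : Set V) : Prop :=
  ∃ (a : V) (c : G.Walk a a), c.IsCycle ∧ S = {v | v ∈ c.support} ∧
    ∀ u v : V, u ∈ c.support → v ∈ c.support → G.Adj u v → s(u, v) ∈ c.edges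

/-- `G` is chordal: every cycle of length at least four has a chord. -/
def IsChordal (G : SimpleGraph V) : Prop :=
  ∀ (a : V) (c : G.Walk a a), c.IsCycle → 4 ≤ c.length →
    ∃ u v : V, u ∈ c.support ∧ v ∈ c.support ∧ G.Adj u v ∧ s(u, v) ∉ c.edges

/-- `G` is biconnected (2-connected): connected, at least three vertices, no cut vertex. -/
def IsBiconnected (G : SimpleGraph V) : Prop :=
  G.Connected ∧ 3 ≤ Nat.card V ∧ ∀ x : V, ¬ IsCutVertex G x

/-- `G` is a cactus: connected, and any two distinct simple cycles share at most one vertex. -/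
def IsCactus (G : SimpleGraph V) : Prop :=
  G.Connected ∧
  ∀ (a b : V) (c₁ : G.Walk a a) (c₂ : G.Walk b b), c₁.IsCycle → c₂.IsCycle →
    {e | e ∈ c₁.edges} ≠ {e | e ∈ c₂.edges} →
    {v | v ∈ c₁.support ∧ v ∈ c₂.support}.Subsingleton

/-- `mvc_S(G)`: minimum cardinality of a vertex cover of `G` containing all vertices of `S`. -/
noncomputable def mvcOn (G : SimpleGraph V) (S : Set V) : ℕ :=
  sInf {k | ∃ T : Set V, IsCover G T ∧ S ⊆ T ∧ Nat.card ↥T = k}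

/-- `P` is an induced path of `G`. -/
def IsInducedPath (G : SimpleGraph V) {a b : V} (P : G.Walk a b) : Prop :=
  P.IsPath ∧ ∀ u v : V, u ∈ P.support → v ∈ P.support → G.Adj u v → s(u, v) ∈ P.edges

/-- `P` is obtained by removing one edge from an induced cycle of `G`. -/
def IsInducedCycleMinusEdge (G : SimpleGraph V) {a b : V} (P : G.Walk a b) : Prop :=
  P.IsPath ∧ 2 ≤ P.length ∧ G.Adj a b ∧
    ∀ u v : V, u ∈ P.support → v ∈ P.support → G.Adj u v →
      (s(u, v) ∈ P.edges ∨ s(u, v) = s(a, b))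

open Classical in
/-- `P` is an eventful path of `G` (with `X` the set of cut vertices of `G`): it is an
induced path or an induced cycle minus an edge, its endpoints lie in `X`, and every
(contiguous) subpath of `P` with both endpoints in `X` has an even number of vertices
outside `X`. -/
def Eventful (G : SimpleGraph V) (X : Set V) {a b : V} (P : G.Walk a b) : Prop :=
  (IsInducedPath G P ∨ IsInducedCycleMinusEdge G P) ∧ a ∈ X ∧ b ∈ X ∧
    ∀ i j : Fin P.support.length, (i : ℕ) ≤ (j : ℕ) →
      P.support.get i ∈ X → P.support.get j ∈ X →
      Even (Multiset.countP (fun v => v ∉ X)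
        (((P.support.drop (i : ℕ)).take ((j : ℕ) - (i : ℕ) + 1) : List V) : Multiset V))

/-- The vertex bunch `VB_G(P)` of the path `P`: `V(P)` together with all vertices of the
`P`-components. -/
def vertexBunch (G : SimpleGraph V) (X : Set V) {a b : V} (P : G.Walk a b) : Set V :=
  {v | v ∈ P.support} ∪
    ⋃ p ∈ SComponents G X {v | v ∈ P.support}, xCompSet G p.1 p.2


/-! ### Guard moves -/

/-- The attack on `uv` is defended by the set of moves `M`. -/
def Hit (M : Multiset (V × V)) (u v : V) : Prop := (u, v) ∈ M ∨ (v, u) ∈ M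

/-- The set of moves in which no guard of `C` changes its place. -/
def diag (C : Multiset V) : Multiset (V × V) := C.map (fun v => (v, v))

lemma validMove_diag (G : SimpleGraph V) (C : Multiset V) : ValidMove G C C (diag C) := by
  refine ⟨?_, ?_, ?_⟩
  · simp [diag]
  · simp [diag]
  · intro p hp
    simp only [diag, Multiset.mem_map] at hp
    obtain ⟨v, -, rfl⟩ := hp
    exact Or.inl rfl

lemma validMove_zero (G : SimpleGraph V) : ValidMove G 0 0 0 := by
  refine ⟨by simp, by simp, by simp⟩

lemma ValidMove.add {G : SimpleGraph V} {C C' D D' : Multiset V} {M N : Multiset (V × V)}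
    (h : ValidMove G C C' M) (h' : ValidMove G D D' N) :
    ValidMove G (C + D) (C' + D') (M + N) := by
  obtain ⟨h1, h2, h3⟩ := h
  obtain ⟨g1, g2, g3⟩ := h'
  refine ⟨by simp [h1, g1], by simp [h2, g2], ?_⟩
  intro p hp
  rcases Multiset.mem_add.1 hp with hp | hp
  · exact h3 p hp
  · exact g3 p hp

lemma ValidMove.sum {G : SimpleGraph V} (B : Finset V) {C C' : V → Multiset V}
    {M : V → Multiset (V × V)} (h : ∀ y ∈ B, ValidMove G (C y) (C' y) (M y)) :
    ValidMove G (∑ y ∈ B, C y) (∑ y ∈ B, C' y) (∑ y ∈ B, M y) := by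
  classical
  induction B using Finset.induction_on with
  | empty => simpa using validMove_zero G
  | insert a B ha ih =>
    rw [Finset.sum_insert ha, Finset.sum_insert ha, Finset.sum_insert ha]
    exact (h a (Finset.mem_insert_self _ _)).add
      (ih fun y hy => h y (Finset.mem_insert_of_mem hy))

lemma Hit.left {M N : Multiset (V × V)} {u v : V} (h : Hit M u v) : Hit (M + N) u v := by
  rcases h with h | h
  · exact Or.inl (Multiset.mem_add.2 (Or.inl h))
  · exact Or.inr (Multiset.mem_add.2 (Or.inl h))

lemma Hit.right {M N : Multiset (V × V)} {u v : V} (h : Hit N u v) : Hit (M + N) u v := by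
  rcases h with h | h
  · exact Or.inl (Multiset.mem_add.2 (Or.inr h))
  · exact Or.inr (Multiset.mem_add.2 (Or.inr h))

lemma Hit.sum {B : Finset V} {M : V → Multiset (V × V)} {u v y : V} (hy : y ∈ B)
    (h : Hit (M y) u v) : Hit (∑ y ∈ B, M y) u v := by
  classical
  rw [← Finset.add_sum_erase B M hy]
  exact h.left

/-- A rooted strategy on `S` with root `x`: `Lo` and `Hi` consist of configurations from which
one guard on `x` is removed; `Lo` has `a` and `Hi` has `a + 1` remaining guards. -/
structure Strat (G : SimpleGraph V) (S : Finset V) (x : V) (a : ℕ)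
    (Lo Hi : Set (Multiset V)) : Prop where
  ne : Lo.Nonempty
  loC : ∀ R ∈ Lo, Multiset.card R = a
  hiC : ∀ R ∈ Hi, Multiset.card R = a + 1
  loCov : ∀ R ∈ Lo, ∀ u ∈ S, ∀ v ∈ S, G.Adj u v → u ∈ x ::ₘ R ∨ v ∈ x ::ₘ R
  hiCov : ∀ R ∈ Hi, ∀ u ∈ S, ∀ v ∈ S, G.Adj u v → u ∈ x ::ₘ R ∨ v ∈ x ::ₘ R
  hh : ∀ R ∈ Hi, ∀ u ∈ S, ∀ v ∈ S, G.Adj u v →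
    ∃ R' ∈ Hi, ∃ M, ValidMove G (x ::ₘ R) (x ::ₘ R') M ∧ Hit M u v
  hl : ∀ R ∈ Hi, ∃ R' ∈ Lo, ∃ M, ValidMove G R (x ::ₘ R') M
  lh : ∀ R ∈ Lo, ∃ R' ∈ Hi, ∃ M, ValidMove G (x ::ₘ R) R' M
  la : ∀ R ∈ Lo, ∀ u ∈ S, ∀ v ∈ S, G.Adj u v →
    (∃ R' ∈ Lo, ∃ M, ValidMove G (x ::ₘ R) (x ::ₘ R') M ∧ Hit M u v) ∨
    (∃ R' ∈ Hi, ∃ M, ValidMove G (x ::ₘ R) R' M ∧ Hit M u v)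

lemma strat_single (G : SimpleGraph V) (x : V) :
    Strat G {x} x 0 {0} {{x}} := by
  have hno : ∀ u ∈ ({x} : Finset V), ∀ v ∈ ({x} : Finset V), ¬ G.Adj u v := by
    intro u hu v hv
    rw [Finset.mem_singleton] at hu hv
    subst hu; subst hv
    exact G.loopless.irrefl _
  constructor
  · exact ⟨0, rfl⟩
  · rintro R rfl; rfl
  · rintro R rfl; rfl
  · intro R _ u hu v hv h; exact absurd h (hno u hu v hv)
  · intro R _ u hu v hv h; exact absurd h (hno u hu v hv)
  · intro R _ u hu v hv h; exact absurd h (hno u hu v hv)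
  · rintro R rfl
    exact ⟨0, rfl, _, validMove_diag G {x}⟩
  · rintro R rfl
    exact ⟨{x}, rfl, _, validMove_diag G {x}⟩
  · intro R _ u hu v hv h; exact absurd h (hno u hu v hv)

/-- The multiset of the elements of an option. -/
def oM : Option V → Multiset V
  | none => 0
  | some v => {v}

/-- A strategy for a block `B` whose vertices in `X` carry branches.  A state consists of the
multiset `O` of occupied vertices of the block and possibly a vertex whose branch holds the
additional guard. -/
structure Core (G : SimpleGraph V) (B : Finset V) (X : Set V) (N : ℕ)
    (T : Set (Multiset V × Option V)) : Prop where
  ne : T.Nonempty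
  card : ∀ O h, (O, h) ∈ T → Multiset.card O + Multiset.card (oM h) = N
  cov : ∀ O h, (O, h) ∈ T → ∀ u ∈ B, ∀ v ∈ B, G.Adj u v → u ∈ O ∨ v ∈ O
  sub : ∀ O h, (O, h) ∈ T → ∀ y ∈ X, y ∈ O
  hB : ∀ O y, (O, some y) ∈ T → y ∈ B ∧ y ∈ O
  k2 : ∀ O h, (O, h) ∈ T → ∀ y ∈ X, h ≠ some y → ∃ O', (O', some y) ∈ T ∧
    ∃ C C' M, ValidMove G C C' M ∧ C + {y} = O ∧ C' + oM h = O'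
  k3 : ∀ O h, (O, h) ∈ T → ∀ u ∈ B, ∀ v ∈ B, G.Adj u v → ∃ O' h', (O', h') ∈ T ∧
    ∃ C C' M, ValidMove G C C' M ∧ Hit M u v ∧
      ((h' = h ∧ C = O ∧ C' = O') ∨ (h' ≠ h ∧ C + oM h' = O ∧ C' + oM h = O'))

open Classical in
lemma sum_ite_oM (B : Finset V) (h : Option V) (hB : ∀ y, h = some y → y ∈ B) :
    ∑ y ∈ B, (if h = some y then ({y} : Multiset V) else 0) = oM h := by
  cases h with
  | none => simp [oM]
  | some z =>
    have hz : z ∈ B := hB z rfl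
    simp only [Option.some.injEq, oM]
    rw [Finset.sum_ite_eq]
    simp [hz]

lemma Core.k2' {G : SimpleGraph V} {B : Finset V} {X : Set V} {N : ℕ}
    {T : Set (Multiset V × Option V)} (c : Core G B X N T) {O h} (hO : (O, h) ∈ T)
    {y} (hy : y ∈ X) : ∃ O', (O', some y) ∈ T ∧
    ∃ C C' M, ValidMove G C C' M ∧ C + {y} = O ∧ C' + oM h = O' := by
  classical
  by_cases hh : h = some y
  · subst hh
    refine ⟨O, hO, O.erase y, O.erase y, _, validMove_diag G _, ?_, ?_⟩
    · rw [add_comm, Multiset.singleton_add, Multiset.cons_erase (c.sub _ _ hO y hy)]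
    · rw [add_comm, oM, Multiset.singleton_add, Multiset.cons_erase (c.sub _ _ hO y hy)]
  · exact c.k2 O h hO y hy hh

/-- Low rooted configurations of the glued graph. -/
def GLo (T : Set (Multiset V × Option V)) (B : Finset V) (x : V)
    (Lo : V → Set (Multiset V)) : Set (Multiset V) :=
  {Q | ∃ (O : Multiset V) (R : V → Multiset V), (O, some x) ∈ T ∧ (∀ y ∈ B, R y ∈ Lo y) ∧ x ::ₘ Q = O + ∑ y ∈ B, R y}

/-- The branch configurations `R` match the high branch `h`. -/
def BState (B : Finset V) (Lo Hi : V → Set (Multiset V)) (h : Option V)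
    (R : V → Multiset V) : Prop :=
  ∀ y ∈ B, (h = some y → R y ∈ Hi y) ∧ (h ≠ some y → R y ∈ Lo y)

/-- High rooted configurations of the glued graph. -/
def GHi (T : Set (Multiset V × Option V)) (B : Finset V) (x : V)
    (Lo Hi : V → Set (Multiset V)) : Set (Multiset V) :=
  {Q | ∃ (O : Multiset V) (h : Option V) (R : V → Multiset V), (O, h) ∈ T ∧ BState B Lo Hi h R ∧ x ::ₘ Q = O + ∑ y ∈ B, R y}

section Glue

variable {G : SimpleGraph V} {B : Finset V} {Sf : V → Finset V} {a : V → ℕ}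
  {Lo Hi : V → Set (Multiset V)}

open Classical in
lemma branch_trans (hst : ∀ y ∈ B, Strat G (Sf y) y (a y) (Lo y) (Hi y))
    {h h' : Option V} {R : V → Multiset V} (hR : BState B Lo Hi h R)
    (hne : ∀ y, h = some y → h' ≠ some y)
    (hB : ∀ y, h = some y → y ∈ B) (hB' : ∀ y, h' = some y → y ∈ B)
    (P : V → Multiset (V × V) → Prop)
    (hP : ∀ y ∈ B, h' = some y →
      ∃ R' ∈ Hi y, ∃ M, ValidMove G (y ::ₘ R y) R' M ∧ P y M) :
    ∃ (R' : V → Multiset V) (M : V → Multiset (V × V)), BState B Lo Hi h' R' ∧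
      ValidMove G ((∑ y ∈ B, R y) + oM h') ((∑ y ∈ B, R' y) + oM h) (∑ y ∈ B, M y) ∧
      ∀ y ∈ B, h' = some y → P y (M y) := by
  have key : ∀ y, ∃ (r : Multiset V) (m : Multiset (V × V)), y ∈ B →
      ((h' = some y → r ∈ Hi y) ∧ (h' ≠ some y → r ∈ Lo y)) ∧
      ValidMove G (R y + (if h' = some y then ({y} : Multiset V) else 0))
        (r + (if h = some y then ({y} : Multiset V) else 0)) m ∧ (h' = some y → P y m) := by
    intro y
    by_cases hy : y ∈ B
    · by_cases h1 : h' = some y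
      · obtain ⟨r, hr, m, hm, hp⟩ := hP y hy h1
        have h2 : h ≠ some y := fun e => hne y e h1
        refine ⟨r, m, fun _ => ⟨⟨fun _ => hr, fun e => absurd h1 e⟩, ?_, fun _ => hp⟩⟩
        rw [if_pos h1, if_neg h2, add_zero, add_comm, Multiset.singleton_add]
        exact hm
      · by_cases h2 : h = some y
        · obtain ⟨r, hr, m, hm⟩ := (hst y hy).hl _ ((hR y hy).1 h2)
          refine ⟨r, m, fun _ => ⟨⟨fun e => absurd e h1, fun _ => hr⟩, ?_,
            fun e => absurd e h1⟩⟩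
          rw [if_pos h2, if_neg h1, add_zero, add_comm, Multiset.singleton_add]
          exact hm
        · refine ⟨R y, diag (R y), fun _ => ⟨⟨fun e => absurd e h1, fun _ => (hR y hy).2 h2⟩,
            ?_, fun e => absurd e h1⟩⟩
          rw [if_neg h1, if_neg h2, add_zero]
          exact validMove_diag G _
    · exact ⟨0, 0, fun e => absurd e hy⟩
  choose R' M hk using key
  refine ⟨R', M, fun y hy => (hk y hy).1, ?_, fun y hy => (hk y hy).2.2⟩
  have := ValidMove.sum (G := G) B fun y hy => (hk y hy).2.1
  rw [Finset.sum_add_distrib, Finset.sum_add_distrib, sum_ite_oM B h' hB',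
    sum_ite_oM B h hB] at this
  exact this

open Classical in
lemma branch_local {h : Option V} {R : V → Multiset V} (hR : BState B Lo Hi h R)
    {y : V} (hy : y ∈ B) {O : Multiset V} (hO : y ∈ O) {r : Multiset V}
    (hr : (h = some y → r ∈ Hi y) ∧ (h ≠ some y → r ∈ Lo y)) {m : Multiset (V × V)}
    (hm : ValidMove G (y ::ₘ R y) (y ::ₘ r) m) {u v : V} (hu : Hit m u v) :
    ∃ (R' : V → Multiset V) (M : Multiset (V × V)), BState B Lo Hi h R' ∧
      ValidMove G (O + ∑ y ∈ B, R y) (O + ∑ y ∈ B, R' y) M ∧ Hit M u v := by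
  refine ⟨Function.update R y r,
    diag (O.erase y) + (m + ∑ z ∈ B.erase y, diag (R z)), ?_, ?_, hu.left.right⟩
  · intro z hz
    by_cases hzy : z = y
    · subst hzy
      simpa using hr
    · simpa [hzy] using hR z hz
  · have e1 : O + ∑ y ∈ B, R y = O.erase y + ((y ::ₘ R y) + ∑ z ∈ B.erase y, R z) := by
      rw [← Finset.add_sum_erase B R hy]
      conv_lhs => rw [← Multiset.cons_erase hO]
      simp only [← Multiset.singleton_add]
      abel
    have e2 : O + ∑ z ∈ B, Function.update R y r z
        = O.erase y + ((y ::ₘ r) + ∑ z ∈ B.erase y, R z) := by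
      rw [← Finset.add_sum_erase B _ hy]
      have : ∑ z ∈ B.erase y, Function.update R y r z = ∑ z ∈ B.erase y, R z := by
        apply Finset.sum_congr rfl
        intro z hz
        rw [Function.update_of_ne (Finset.ne_of_mem_erase hz)]
      rw [this, Function.update_self]
      conv_lhs => rw [← Multiset.cons_erase hO]
      simp only [← Multiset.singleton_add]
      abel
    rw [e1, e2]
    exact (validMove_diag G _).add (hm.add (ValidMove.sum _ fun z _ => validMove_diag G _))

lemma exists_cons_of_mem {x : V} {D : Multiset V} (h : x ∈ D) : ∃ Q, x ::ₘ Q = D := by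
  obtain ⟨Q, hQ⟩ := Multiset.exists_cons_of_mem h
  exact ⟨Q, hQ.symm⟩

lemma bstate_none {R : V → Multiset V} :
    BState B Lo Hi none R ↔ ∀ y ∈ B, R y ∈ Lo y := by
  constructor
  · intro h y hy
    exact (h y hy).2 (by simp)
  · intro h y hy
    exact ⟨fun e => by simp at e, fun _ => h y hy⟩

theorem glue (hst : ∀ y ∈ B, Strat G (Sf y) y (a y) (Lo y) (Hi y))
    {X : Set V} {x : V} (hx : x ∈ X) (hXB : ∀ y ∈ X, y ∈ B) {N : ℕ}
    {T : Set (Multiset V × Option V)} (c : Core G B X N T) {S : Finset V}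
    (hedge : ∀ u ∈ S, ∀ v ∈ S, G.Adj u v →
      (u ∈ B ∧ v ∈ B) ∨ ∃ y ∈ X, u ∈ Sf y ∧ v ∈ Sf y) :
    Strat G S x (N - 2 + ∑ y ∈ B, a y) (GLo T B x Lo) (GHi T B x Lo Hi) := by
  classical
  have hxB := hXB x hx
  have cardR : ∀ (h : Option V) (R : V → Multiset V), BState B Lo Hi h R → (∀ y, h = some y → y ∈ B) →
      Multiset.card (∑ y ∈ B, R y) = (∑ y ∈ B, a y) + Multiset.card (oM h) := by
    intro h R hR hB
    rw [← sum_ite_oM B h hB, Multiset.card_sum, Multiset.card_sum,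
      ← Finset.sum_add_distrib]
    apply Finset.sum_congr rfl
    intro y hy
    by_cases e : h = some y
    · simp [e, (hst y hy).hiC _ ((hR y hy).1 e)]
    · simp [e, (hst y hy).loC _ ((hR y hy).2 e)]
  have hTB : ∀ O h, (O, h) ∈ T → ∀ y, h = some y → y ∈ B := by
    rintro O h hO y rfl
    exact (c.hB _ _ hO).1
  have covR : ∀ (O : Multiset V) (h : Option V) (R : V → Multiset V), (O, h) ∈ T → BState B Lo Hi h R → ∀ u ∈ S, ∀ v ∈ S, G.Adj u v →
      u ∈ O + ∑ y ∈ B, R y ∨ v ∈ O + ∑ y ∈ B, R y := by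
    intro O h R hO hR u hu v hv huv
    rcases hedge u hu v hv huv with ⟨hu', hv'⟩ | ⟨y, hy, hu', hv'⟩
    · rcases c.cov O h hO u hu' v hv' huv with h1 | h1
      · exact Or.inl (Multiset.mem_add.2 (Or.inl h1))
      · exact Or.inr (Multiset.mem_add.2 (Or.inl h1))
    · have hyO := c.sub O h hO y hy
      have hyB := hXB y hy
      have hsub : ∀ w, w ∈ y ::ₘ R y → w ∈ O + ∑ y ∈ B, R y := by
        intro w hw
        rw [← Finset.add_sum_erase B R hyB]
        rcases Multiset.mem_cons.1 hw with rfl | hw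
        · exact Multiset.mem_add.2 (Or.inl hyO)
        · exact Multiset.mem_add.2 (Or.inr (Multiset.mem_add.2 (Or.inl hw)))
      have hcov : u ∈ y ::ₘ R y ∨ v ∈ y ::ₘ R y := by
        by_cases e : h = some y
        · exact (hst y hyB).hiCov _ ((hR y hyB).1 e) u hu' v hv' huv
        · exact (hst y hyB).loCov _ ((hR y hyB).2 e) u hu' v hv' huv
      exact hcov.imp (hsub u) (hsub v)
  have lhs : ∀ R : V → Multiset V, (∀ y ∈ B, R y ∈ Lo y) → ∀ y ∈ B, ∃ R' ∈ Hi y, ∃ M,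
      ValidMove G (y ::ₘ R y) R' M ∧ True := by
    intro R hR y hy
    obtain ⟨R', h1, M, h2⟩ := (hst y hy).lh _ (hR y hy)
    exact ⟨R', h1, M, h2, trivial⟩
  have xO : ∀ O h (R : V → Multiset V), (O, h) ∈ T → x ∈ O + ∑ y ∈ B, R y :=
    fun O h R hO => Multiset.mem_add.2 (Or.inl (c.sub O h hO x hx))
  constructor
  · -- nonempty
    obtain ⟨⟨O, h⟩, hO⟩ := c.ne
    obtain ⟨O', hO', -⟩ := c.k2' hO hx
    have : ∀ y, ∃ r, y ∈ B → r ∈ Lo y := by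
      intro y
      by_cases hy : y ∈ B
      · obtain ⟨r, hr⟩ := (hst y hy).ne
        exact ⟨r, fun _ => hr⟩
      · exact ⟨0, fun e => absurd e hy⟩
    choose R hR using this
    obtain ⟨Q, hQ⟩ := exists_cons_of_mem (xO O' _ R hO')
    exact ⟨Q, O', R, hO', hR, hQ⟩
  · rintro Q ⟨O, R, hO, hR, hQ⟩
    have h1 := congrArg Multiset.card hQ
    rw [Multiset.card_cons, Multiset.card_add, cardR none R (bstate_none.2 hR) (by simp)] at h1
    have h2 := c.card _ _ hO
    have h3 : 0 < Multiset.card O := Multiset.card_pos_iff_exists_mem.2 ⟨x, c.sub _ _ hO x hx⟩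
    simp only [oM, Multiset.card_zero, Multiset.card_singleton] at h1 h2
    omega
  · rintro Q ⟨O, h, R, hO, hR, hQ⟩
    have h1 := congrArg Multiset.card hQ
    rw [Multiset.card_cons, Multiset.card_add, cardR h R hR (hTB O h hO)] at h1
    have h2 := c.card _ _ hO
    obtain ⟨O', hO', -⟩ := c.k2' hO hx
    have h4 := c.card _ _ hO'
    have h3 : 0 < Multiset.card O' := Multiset.card_pos_iff_exists_mem.2 ⟨x, c.sub _ _ hO' x hx⟩
    simp only [oM, Multiset.card_singleton] at h4
    omega
  · rintro Q ⟨O, R, hO, hR, hQ⟩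
    rw [hQ]
    intro u hu v hv huv
    have hR' := hR
    obtain ⟨R1, -⟩ : ∃ R1 : V → Multiset V, True := ⟨R, trivial⟩
    rcases hedge u hu v hv huv with ⟨hu', hv'⟩ | ⟨y, hy, hu', hv'⟩
    · rcases c.cov O _ hO u hu' v hv' huv with h1 | h1
      · exact Or.inl (Multiset.mem_add.2 (Or.inl h1))
      · exact Or.inr (Multiset.mem_add.2 (Or.inl h1))
    · have hyO := c.sub O _ hO y hy
      have hyB := hXB y hy
      have hsub : ∀ w, w ∈ y ::ₘ R y → w ∈ O + ∑ y ∈ B, R y := by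
        intro w hw
        rw [← Finset.add_sum_erase B R hyB]
        rcases Multiset.mem_cons.1 hw with rfl | hw
        · exact Multiset.mem_add.2 (Or.inl hyO)
        · exact Multiset.mem_add.2 (Or.inr (Multiset.mem_add.2 (Or.inl hw)))
      exact ((hst y hyB).loCov _ (hR y hyB) u hu' v hv' huv).imp (hsub u) (hsub v)
  · rintro Q ⟨O, h, R, hO, hR, hQ⟩
    rw [hQ]
    exact covR O h R hO hR
  · -- hh
    rintro Q ⟨O, h, R, hO, hR, hQ⟩ u hu v hv huv
    rw [hQ]
    rcases hedge u hu v hv huv with ⟨hu', hv'⟩ | ⟨y, hy, hu', hv'⟩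
    · obtain ⟨O', h', hO', C, C', M, hM, hit, hcase⟩ := c.k3 O h hO u hu' v hv' huv
      rcases hcase with ⟨rfl, rfl, rfl⟩ | ⟨hne, e1, e2⟩
      · obtain ⟨Q', hQ'⟩ := exists_cons_of_mem (xO C' _ R hO')
        refine ⟨Q', ⟨C', h', R, hO', hR, hQ'⟩, M + diag (∑ y ∈ B, R y), ?_, hit.left⟩
        rw [hQ']
        exact hM.add (validMove_diag G _)
      · have hLH : ∀ y ∈ B, h' = some y →
            ∃ R' ∈ Hi y, ∃ M, ValidMove G (y ::ₘ R y) R' M ∧ True := by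
          intro y hy e
          have : R y ∈ Lo y := (hR y hy).2 (fun e' => hne (e.trans e'.symm))
          obtain ⟨R', h1, M, h2⟩ := (hst y hy).lh _ this
          exact ⟨R', h1, M, h2, trivial⟩
        obtain ⟨R', M', hR', hM', -⟩ := branch_trans hst hR
          (fun y e e' => hne (e'.trans e.symm)) (hTB O h hO) (hTB O' h' hO') _ hLH
        obtain ⟨Q', hQ'⟩ := exists_cons_of_mem (xO O' _ R' hO')
        refine ⟨Q', ⟨O', h', R', hO', hR', hQ'⟩, M + ∑ y ∈ B, M' y, ?_, hit.left⟩
        · rw [hQ']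
          have := hM.add hM'
          rw [← e1, ← e2]
          convert this using 1 <;> abel
    · have hyB := hXB y hy
      have hyO := c.sub O h hO y hy
      by_cases e : h = some y
      · obtain ⟨r, hr, m, hm, hit⟩ := (hst y hyB).hh _ ((hR y hyB).1 e) u hu' v hv' huv
        obtain ⟨R', M, hR', hM, hit'⟩ := branch_local hR hyB hyO
          ⟨fun _ => hr, fun e' => absurd e e'⟩ hm hit
        obtain ⟨Q', hQ'⟩ := exists_cons_of_mem (xO O _ R' hO)
        exact ⟨Q', ⟨O, h, R', hO, hR', hQ'⟩, M, hQ' ▸ hM, hit'⟩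
      · rcases (hst y hyB).la _ ((hR y hyB).2 e) u hu' v hv' huv with
          ⟨r, hr, m, hm, hit⟩ | ⟨r, hr, m, hm, hit⟩
        · obtain ⟨R', M, hR', hM, hit'⟩ := branch_local hR hyB hyO
            ⟨fun e' => absurd e' e, fun _ => hr⟩ hm hit
          obtain ⟨Q', hQ'⟩ := exists_cons_of_mem (xO O _ R' hO)
          exact ⟨Q', ⟨O, h, R', hO, hR', hQ'⟩, M, hQ' ▸ hM, hit'⟩
        · obtain ⟨O', hO', C, C', M, hM, e1, e2⟩ := c.k2' hO hy
          have hLH : ∀ z ∈ B, some y = some z →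
              ∃ R' ∈ Hi z, ∃ M, ValidMove G (z ::ₘ R z) R' M ∧ Hit M u v := by
            intro z hz e
            cases e
            exact ⟨r, hr, m, hm, hit⟩
          obtain ⟨R', M', hR', hM', hit'⟩ := branch_trans hst hR
            (h' := some y) (fun z e1 e2 => e (e1.trans e2.symm)) (hTB O h hO)
            (hTB O' _ hO') (fun _ M => Hit M u v) hLH
          obtain ⟨Q', hQ'⟩ := exists_cons_of_mem (xO O' _ R' hO')
          refine ⟨Q', ⟨O', _, R', hO', hR', hQ'⟩, M + ∑ y ∈ B, M' y, ?_,
            (Hit.sum hyB (hit' y hyB rfl)).right⟩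
          · rw [hQ']
            have := hM.add hM'
            rw [← e1, ← e2]
            have hs : oM (some y) = ({y} : Multiset V) := rfl
            rw [hs] at this
            convert this using 1 <;> abel
  · -- hl
    rintro Q ⟨O, h, R, hO, hR, hQ⟩
    obtain ⟨O', hO', C, C', M, hM, e1, e2⟩ := c.k2' hO hx
    obtain ⟨R', M', hR', hM', -⟩ := branch_trans hst hR (h' := none) (by simp)
      (hTB O h hO) (by simp) (fun _ _ => True) (by simp)
    obtain ⟨Q', hQ'⟩ := exists_cons_of_mem (xO O' _ R' hO')
    refine ⟨Q', ⟨O', R', hO', bstate_none.1 hR', hQ'⟩, M + ∑ y ∈ B, M' y, ?_⟩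
    have := hM.add hM'
    rw [hQ', ← e2]
    have e3 : C + ((∑ y ∈ B, R y) + oM none) = Q := by
      apply (Multiset.cons_inj_right x).1
      rw [hQ, ← e1, ← Multiset.singleton_add, oM]
      abel
    rw [e3] at this
    convert this using 1
    abel
  · -- lh
    rintro Q ⟨O, R, hO, hR, hQ⟩
    obtain ⟨R', M', hR', hM', -⟩ := branch_trans hst (bstate_none.2 hR) (h' := some x) (by simp)
      (by simp) (hTB O _ hO) (fun _ _ => True) (fun y hy _ => lhs R hR y hy)
    obtain ⟨Q', hQ'⟩ := exists_cons_of_mem (xO O _ R' hO)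
    refine ⟨Q', ⟨O, _, R', hO, hR', hQ'⟩, diag (O.erase x) + ∑ y ∈ B, M' y, ?_⟩
    have hxO := c.sub O _ hO x hx
    have := (validMove_diag G (O.erase x)).add hM'
    have e3 : O.erase x + ((∑ y ∈ B, R' y) + oM none) = Q' := by
      apply (Multiset.cons_inj_right x).1
      rw [hQ', oM, add_zero, ← Multiset.cons_add, Multiset.cons_erase hxO]
    rw [e3] at this
    rw [hQ]
    convert this using 1
    conv_lhs => rw [← Multiset.cons_erase hxO]
    rw [← Multiset.singleton_add, oM]
    abel
  · -- la
    rintro Q ⟨O, R, hO, hR, hQ⟩ u hu v hv huv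
    have hR0 : BState B Lo Hi none R := bstate_none.2 hR
    have fin : ∀ O' h' C C' M, (O', h') ∈ T → ValidMove G C C' M → C + oM h' = O →
        C' + {x} = O' → ∀ P : V → Multiset (V × V) → Prop, (∀ y ∈ B, h' = some y →
          ∃ R' ∈ Hi y, ∃ M, ValidMove G (y ::ₘ R y) R' M ∧ P y M) →
        ∃ R' ∈ GHi T B x Lo Hi, ∃ M' : V → Multiset (V × V),
          ValidMove G (x ::ₘ Q) R' (M + ∑ y ∈ B, M' y) ∧
          ∀ y ∈ B, h' = some y → P y (M' y) := by
      intro O' h' C C' M hO' hM e1 e2 P hP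
      obtain ⟨R', M', hR', hM', hp⟩ := branch_trans hst hR0 (h' := h') (by simp)
        (by simp) (hTB O' h' hO') P hP
      obtain ⟨Q', hQ'⟩ := exists_cons_of_mem (xO O' _ R' hO')
      refine ⟨Q', ⟨O', h', R', hO', hR', hQ'⟩, M', ?_, hp⟩
      have := hM.add hM'
      have e3 : C' + ((∑ y ∈ B, R' y) + oM none) = Q' := by
        apply (Multiset.cons_inj_right x).1
        rw [hQ', oM, add_zero, ← e2, ← Multiset.singleton_add]
        abel
      rw [e3] at this
      rw [hQ, ← e1]
      convert this using 1
      abel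
    rcases hedge u hu v hv huv with ⟨hu', hv'⟩ | ⟨y, hy, hu', hv'⟩
    · obtain ⟨O', h', hO', C, C', M, hM, hit, hcase⟩ := c.k3 O _ hO u hu' v hv' huv
      rcases hcase with ⟨rfl, rfl, rfl⟩ | ⟨hne, e1, e2⟩
      · left
        obtain ⟨Q', hQ'⟩ := exists_cons_of_mem (xO C' _ R hO')
        refine ⟨Q', ⟨C', R, hO', hR, hQ'⟩, M + diag (∑ y ∈ B, R y), ?_, hit.left⟩
        rw [hQ', hQ]
        exact hM.add (validMove_diag G _)
      · right
        obtain ⟨Q', hQ', M', hM', -⟩ := fin O' h' C C' M hO' hM e1 e2 (fun _ _ => True)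
          (fun y hy _ => lhs R hR y hy)
        exact ⟨Q', hQ', _, hM', hit.left⟩
    · have hyB := hXB y hy
      have hyO := c.sub O _ hO y hy
      rcases (hst y hyB).la _ (hR y hyB) u hu' v hv' huv with
          ⟨r, hr, m, hm, hit⟩ | ⟨r, hr, m, hm, hit⟩
      · left
        obtain ⟨R', M, hR', hM, hit'⟩ := branch_local hR0 hyB hyO
            ⟨fun e' => by simp at e', fun _ => hr⟩ hm hit
        obtain ⟨Q', hQ'⟩ := exists_cons_of_mem (xO O _ R' hO)
        exact ⟨Q', ⟨O, R', hO, bstate_none.1 hR', hQ'⟩, M, by rw [hQ', hQ]; exact hM, hit'⟩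
      · right
        obtain ⟨O', hO', C, C', M, hM, e1, e2⟩ := c.k2' hO hy
        obtain ⟨Q', hQ', M', hM', hit'⟩ := fin O' (some y) C C' M hO' hM e1 e2
          (fun _ M => Hit M u v) (by
            intro z hz e
            cases e
            exact ⟨r, hr, m, hm, hit⟩)
        exact ⟨Q', hQ', _, hM', (Hit.sum hyB (hit' y hyB rfl)).right⟩

end Glue

/-! ### The core strategy when a minimum cover is connected -/

/-- Reachability inside the set `T`. -/
def RT (G : SimpleGraph V) (T : Set V) : V → V → Prop :=
  Relation.ReflTransGen (fun a b => G.Adj a b ∧ a ∈ T ∧ b ∈ T)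

lemma RT.symm {G : SimpleGraph V} {T : Set V} {u v : V} (h : RT G T u v) : RT G T v u := by
  induction h with
  | refl => exact Relation.ReflTransGen.refl
  | tail _ hbc ih => exact Relation.ReflTransGen.head ⟨hbc.1.symm, hbc.2.2, hbc.2.1⟩ ih

lemma RT.trans {G : SimpleGraph V} {T : Set V} {u v w : V} (h : RT G T u v) (h' : RT G T v w) :
    RT G T u w := Relation.ReflTransGen.trans h h'

lemma RT.mono {G : SimpleGraph V} {T T' : Set V} (hT : T ⊆ T') {u v : V} (h : RT G T u v) :
    RT G T' u v := by
  induction h with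
  | refl => exact Relation.ReflTransGen.refl
  | tail _ hbc ih => exact Relation.ReflTransGen.tail ih ⟨hbc.1, hT hbc.2.1, hT hbc.2.2⟩

lemma RT.step {G : SimpleGraph V} {T : Set V} {u v : V} (h : G.Adj u v) (hu : u ∈ T)
    (hv : v ∈ T) : RT G T u v := Relation.ReflTransGen.single ⟨h, hu, hv⟩

lemma RT.mem {G : SimpleGraph V} {T : Set V} {u v : V} (h : RT G T u v) (hu : u ∈ T) : v ∈ T := by
  induction h with
  | refl => exact hu
  | tail _ hbc _ => exact hbc.2.2

lemma RT.last_exit {G : SimpleGraph V} {Z : Set V} {u w : V} (huw : u ≠ w) {a : V}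
    (h : RT G Z a w) :
    (a ≠ u ∧ RT G (Z \ {u}) a w) ∨
      ∃ u1, G.Adj u u1 ∧ u1 ∈ Z ∧ u1 ≠ u ∧ RT G (Z \ {u}) u1 w := by
  induction h using Relation.ReflTransGen.head_induction_on with
  | refl => exact Or.inl ⟨huw.symm, Relation.ReflTransGen.refl⟩
  | @head a b hab _ ih =>
    rcases ih with ⟨hb, hbw⟩ | h
    · by_cases ha : a = u
      · subst ha
        exact Or.inr ⟨b, hab.1, hab.2.2, hb, hbw⟩
      · exact Or.inl ⟨ha, (RT.step (T := Z \ {u}) hab.1 ⟨hab.2.1, ha⟩ ⟨hab.2.2, hb⟩).trans hbw⟩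
    · exact Or.inr h

open Classical in
lemma shift_move {G : SimpleGraph V} : ∀ (n : ℕ) (Z : Finset V), Z.card = n → ∀ {u w : V},
    u ∈ Z → w ∈ Z → RT G (Z : Set V) u w →
    ∃ M, ValidMove G (Z.val.erase w) (Z.val.erase u) M := by
  intro n
  induction n with
  | zero =>
    intro Z hZ u w hu
    rw [Finset.card_eq_zero] at hZ
    simp [hZ] at hu
  | succ n ih =>
    intro Z hZ u w hu hw h
    by_cases huw : u = w
    · subst huw
      exact ⟨_, validMove_diag G _⟩
    rcases h.last_exit huw with ⟨h1, -⟩ | ⟨u1, h1, h2, h3, h4⟩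
    · exact absurd rfl h1
    · have hc : (Z.erase u).card = n := by rw [Finset.card_erase_of_mem hu, hZ]; rfl
      obtain ⟨M, hM⟩ := ih (Z.erase u) hc (u := u1) (w := w)
        (Finset.mem_erase.2 ⟨h3, h2⟩) (Finset.mem_erase.2 ⟨Ne.symm huw, hw⟩)
        (by simpa using h4)
      have hs : ValidMove G {u} {u1} {(u, u1)} := by
        refine ⟨by simp, by simp, ?_⟩
        intro p hp
        rw [Multiset.mem_singleton] at hp
        subst hp
        exact Or.inr h1
      refine ⟨{(u, u1)} + M, ?_⟩
      have := hs.add hM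
      have e1 : ({u} : Multiset V) + (Z.erase u).val.erase w = Z.val.erase w := by
        rw [Multiset.singleton_add, Finset.erase_val, Multiset.erase_comm, Multiset.cons_erase]
        exact (Multiset.mem_erase_of_ne huw).2 hu
      have e2 : ({u1} : Multiset V) + (Z.erase u).val.erase u1 = Z.val.erase u := by
        rw [Multiset.singleton_add, Finset.erase_val, Multiset.cons_erase]
        exact (Multiset.mem_erase_of_ne h3).2 h2
      rwa [e1, e2] at this

lemma validMove_single {G : SimpleGraph V} {u v : V} (h : u = v ∨ G.Adj u v) :
    ValidMove G {u} {v} {(u, v)} := by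
  refine ⟨by simp, by simp, ?_⟩
  intro p hp
  rw [Multiset.mem_singleton] at hp
  subst hp
  exact h

open Classical in
lemma swap_move {G : SimpleGraph V} {O : Multiset V} {u v : V} (hu : u ∈ O) (hv : v ∈ O)
    (h : G.Adj u v) : ∃ M, ValidMove G O O M ∧ Hit M u v := by
  have hv' : v ∈ O.erase u := (Multiset.mem_erase_of_ne h.ne').2 hv
  have h1 := (validMove_single (Or.inr h)).add
    ((validMove_single (Or.inr h.symm)).add (validMove_diag G ((O.erase u).erase v)))
  refine ⟨_, ?_, Hit.left (N := {(v, u)} + diag ((O.erase u).erase v))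
    (Or.inl (Multiset.mem_singleton_self _))⟩
  have e1 : ({u} : Multiset V) + ({v} + (O.erase u).erase v) = O := by
    rw [Multiset.singleton_add v, Multiset.cons_erase hv', Multiset.singleton_add,
      Multiset.cons_erase hu]
  have e2 : ({v} : Multiset V) + ({u} + (O.erase u).erase v) = O := by
    rw [add_left_comm, e1]
  rwa [e1, e2] at h1

/-- The states of the core strategy with a connected cover `T`. -/
def connStates (B T : Finset V) : Set (Multiset V × Option V) :=
  {p | (p.1 = T.val ∧ ∃ y ∈ T, p.2 = some y) ∨
    (∃ v ∈ B, v ∉ T ∧ p.1 = v ::ₘ T.val ∧ p.2 = none)}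

theorem conn_core {G : SimpleGraph V} {B T : Finset V} {X : Set V} (hTB : T ⊆ B)
    (hX : ∀ y ∈ X, y ∈ T) (hXne : X.Nonempty)
    (hcov : ∀ u ∈ B, ∀ v ∈ B, G.Adj u v → u ∈ T ∨ v ∈ T)
    (hconn : ∀ u ∈ T, ∀ v ∈ T, RT G (T : Set V) u v)
    (hnb : ∀ v ∈ B, v ∉ T → ∃ s ∈ T, G.Adj v s) :
    Core G B X (T.card + 1) (connStates B T) := by
  classical
  have er : ∀ y ∈ T, T.val.erase y + {y} = T.val := by
    intro y hy
    rw [add_comm, Multiset.singleton_add, Multiset.cons_erase hy]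
  have er2 : ∀ y ∈ T, {y} + T.val.erase y = T.val := by
    intro y hy
    rw [Multiset.singleton_add, Multiset.cons_erase hy]
  have er3 : ∀ y ∈ T, ∀ w, {y} + ({w} + T.val.erase y) = w ::ₘ T.val := by
    intro y hy w
    rw [add_left_comm, er2 y hy, Multiset.singleton_add]
  have sh : ∀ u ∈ T, ∀ w ∈ T, ∃ M, ValidMove G (T.val.erase w) (T.val.erase u) M :=
    fun u hu w hw => shift_move _ T rfl hu hw (hconn u hu w hw)
  constructor
  · obtain ⟨x, hx⟩ := hXne
    exact ⟨(T.val, some x), Or.inl ⟨rfl, x, hX x hx, rfl⟩⟩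
  · rintro O h (⟨h1, y, hy, h2⟩ | ⟨v, hv, hvT, h1, h2⟩)
    · simp only at h1 h2
      subst h1 h2
      simp [oM]
    · simp only at h1 h2
      subst h1 h2
      simp [oM]
  · rintro O h (⟨h1, y, hy, h2⟩ | ⟨v, hv, hvT, h1, h2⟩) a ha b hb hab
    · simp only at h1 h2
      subst h1 h2
      exact hcov a ha b hb hab
    · simp only at h1 h2
      subst h1 h2
      exact (hcov a ha b hb hab).imp (Multiset.mem_cons_of_mem) (Multiset.mem_cons_of_mem)
  · rintro O h (⟨h1, y, hy, h2⟩ | ⟨v, hv, hvT, h1, h2⟩) z hz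
    · simp only at h1 h2
      subst h1 h2
      exact hX z hz
    · simp only at h1 h2
      subst h1 h2
      exact Multiset.mem_cons_of_mem (hX z hz)
  · rintro O y (⟨h1, y', hy, h2⟩ | ⟨v, hv, hvT, h1, h2⟩)
    · simp only [Option.some.injEq] at h1 h2
      subst h1 h2
      exact ⟨hTB hy, hy⟩
    · simp at h2
  · rintro O h (⟨h1, y', hy', h2⟩ | ⟨v, hv, hvT, h1, h2⟩) y hy hne
    · simp only at h1 h2
      subst h1 h2
      obtain ⟨M, hM⟩ := sh y' hy' y (hX y hy)
      exact ⟨T.val, Or.inl ⟨rfl, y, hX y hy, rfl⟩, _, _, M, hM, er y (hX y hy), er y' hy'⟩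
    · simp only at h1 h2
      subst h1 h2
      obtain ⟨s, hs, hvs⟩ := hnb v hv hvT
      obtain ⟨M, hM⟩ := sh s hs y (hX y hy)
      refine ⟨T.val, Or.inl ⟨rfl, y, hX y hy, rfl⟩, _, _, _,
        (validMove_single (Or.inr hvs)).add hM, ?_, ?_⟩
      · rw [add_assoc, er y (hX y hy), Multiset.singleton_add]
      · rw [oM, add_zero, add_comm, er s hs]
  · rintro O h (⟨h1, y', hy', h2⟩ | ⟨v, hv, hvT, h1, h2⟩) a ha b hb hab
    · simp only at h1 h2
      subst h1 h2
      have key : ∀ t w, t ∈ T → w ∈ B → w ∉ T → G.Adj t w → ∃ C' M,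
          ValidMove G T.val C' M ∧ (t, w) ∈ M ∧ C' + {y'} = w ::ₘ T.val := by
        intro t w ht hw hwT htw
        obtain ⟨M, hM⟩ := sh y' hy' t ht
        have := (validMove_single (Or.inr htw)).add hM
        rw [er2 t ht] at this
        refine ⟨_, _, this, by simp, ?_⟩
        rw [add_assoc, er y' hy', Multiset.singleton_add]
      by_cases ha' : a ∈ T
      · by_cases hb' : b ∈ T
        · obtain ⟨M, hM, hit⟩ := swap_move (G := G) (O := T.val) ha' hb' hab
          exact ⟨T.val, some y', Or.inl ⟨rfl, y', hy', rfl⟩, _, _, M, hM, hit,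
            Or.inl ⟨rfl, rfl, rfl⟩⟩
        · obtain ⟨C', M, hM, hit, e⟩ := key a b ha' hb hb' hab
          exact ⟨_, none, Or.inr ⟨b, hb, hb', rfl, rfl⟩, _, C', M, hM, Or.inl hit,
            Or.inr ⟨by simp, by simp [oM], e⟩⟩
      · have hb' : b ∈ T := (hcov a ha b hb hab).resolve_left ha'
        obtain ⟨C', M, hM, hit, e⟩ := key b a hb' ha ha' hab.symm
        exact ⟨_, none, Or.inr ⟨a, ha, ha', rfl, rfl⟩, _, C', M, hM, Or.inr hit,
          Or.inr ⟨by simp, by simp [oM], e⟩⟩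
    · simp only at h1 h2
      subst h1 h2
      have key : ∀ t w, t ∈ T → w ∈ B → w ∉ T → G.Adj t w → ∃ M,
          ValidMove G (v ::ₘ T.val) (w ::ₘ T.val) M ∧ (t, w) ∈ M := by
        intro t w ht hw hwT htw
        obtain ⟨s, hs, hvs⟩ := hnb v hv hvT
        obtain ⟨M, hM⟩ := sh s hs t ht
        have := (validMove_single (Or.inr hvs)).add ((validMove_single (Or.inr htw)).add hM)
        rw [er2 t ht, er3 s hs, Multiset.singleton_add] at this
        exact ⟨_, this, by simp⟩
      by_cases ha' : a ∈ v ::ₘ T.val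
      · by_cases hb' : b ∈ v ::ₘ T.val
        · obtain ⟨M, hM, hit⟩ := swap_move (G := G) ha' hb' hab
          exact ⟨_, none, Or.inr ⟨v, hv, hvT, rfl, rfl⟩, _, _, M, hM, hit,
            Or.inl ⟨rfl, rfl, rfl⟩⟩
        · have hb2 : b ∉ T := fun h => hb' (Multiset.mem_cons_of_mem h)
          have ha2 : a ∈ T := (hcov a ha b hb hab).resolve_right hb2
          obtain ⟨M, hM, hit⟩ := key a b ha2 hb hb2 hab
          exact ⟨_, none, Or.inr ⟨b, hb, hb2, rfl, rfl⟩, _, _, M, hM, Or.inl hit,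
            Or.inl ⟨rfl, rfl, rfl⟩⟩
      · have ha2 : a ∉ T := fun h => ha' (Multiset.mem_cons_of_mem h)
        have hb2 : b ∈ T := (hcov a ha b hb hab).resolve_left ha2
        obtain ⟨M, hM, hit⟩ := key b a hb2 ha ha2 hab.symm
        exact ⟨_, none, Or.inr ⟨a, ha, ha2, rfl, rfl⟩, _, _, M, hM, Or.inr hit,
          Or.inl ⟨rfl, rfl, rfl⟩⟩

/-- What has to be shown for a block `B` whose vertices in `X` carry branches, where the vertex
`x` leads to the rest of the graph: there is a core strategy, and its number of guards is optimal
for every local guard distribution `d` satisfying the necessary conditions. -/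
def BlockGoal (G : SimpleGraph V) (B : Finset V) (X : Set V) (x : V) : Prop :=
  ∃ (N : ℕ) (T : Set (Multiset V × Option V)), Core G B X N T ∧
    ∀ d : V → ℕ, (∀ y ∈ X, y ≠ x → 1 ≤ d y) →
      (∀ u ∈ B, ∀ v ∈ B, G.Adj u v → u ≠ x → v ≠ x → 1 ≤ d u ∨ 1 ≤ d v) →
      (∀ Y : Finset V, (∀ y ∈ Y, y ∈ X ∧ y ≠ x) → ∀ z ∈ Y, ∀ w ∈ B, w ∉ Y → G.Adj z w →
        (∀ y ∈ Y, ∀ u ∈ B, G.Adj y u → u ∈ Y ∨ (u ≠ x ∧ u ∉ X ∧ d u = 0)) →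
        ∃ y ∈ Y, 2 ≤ d y) →
      ∀ Bx : Finset V, (∀ y, y ∈ Bx ↔ y ∈ B ∧ y ≠ x) → N - 2 ≤ ∑ y ∈ Bx, d y

theorem conn_block {G : SimpleGraph V} {B : Finset V} {X : Set V} {x : V}
    (hXB : ∀ y ∈ X, y ∈ B) (hx : x ∈ X) (hnb : ∀ v ∈ B, ∃ s ∈ B, G.Adj v s)
    (hconn : ∀ T : Finset V, T ⊆ B → (∀ y ∈ X, y ∈ T) →
      (∀ u ∈ B, ∀ v ∈ B, G.Adj u v → u ∈ T ∨ v ∈ T) →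
      ∀ u ∈ T, ∀ v ∈ T, RT G (T : Set V) u v) : BlockGoal G B X x := by
  classical
  let P : Finset V → Prop := fun T => T ⊆ B ∧ (∀ y ∈ X, y ∈ T) ∧
    (∀ u ∈ B, ∀ v ∈ B, G.Adj u v → u ∈ T ∨ v ∈ T)
  have hP : ∃ n, ∃ T, P T ∧ T.card = n :=
    ⟨_, B, ⟨Finset.Subset.refl _, hXB, fun u hu v _ _ => Or.inl hu⟩, rfl⟩
  obtain ⟨T, ⟨hTB, hXT, hcov⟩, hcard⟩ := Nat.find_spec hP
  have hmin : ∀ T', P T' → T.card ≤ T'.card := by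
    intro T' hT'
    rw [hcard]
    exact Nat.find_min' hP ⟨T', hT', rfl⟩
  refine ⟨T.card + 1, connStates B T, conn_core hTB hXT ⟨x, hx⟩ hcov
    (hconn T hTB hXT hcov) ?_, ?_⟩
  · intro v hv hvT
    obtain ⟨s, hs, hvs⟩ := hnb v hv
    exact ⟨s, (hcov v hv s hs hvs).resolve_left hvT, hvs⟩
  · intro d h1 h2 _ Bx hBx
    let D := Bx.filter (fun y => 1 ≤ d y)
    have hD : P (insert x D) := by
      refine ⟨?_, ?_, ?_⟩
      · intro y hy
        rcases Finset.mem_insert.1 hy with rfl | hy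
        · exact hXB _ hx
        · exact ((hBx y).1 (Finset.mem_filter.1 hy).1).1
      · intro y hy
        by_cases hyx : y = x
        · exact hyx ▸ Finset.mem_insert_self _ _
        · exact Finset.mem_insert_of_mem
            (Finset.mem_filter.2 ⟨(hBx y).2 ⟨hXB y hy, hyx⟩, h1 y hy hyx⟩)
      · intro u hu v hv huv
        by_cases hux : u = x
        · exact Or.inl (hux ▸ Finset.mem_insert_self _ _)
        by_cases hvx : v = x
        · exact Or.inr (hvx ▸ Finset.mem_insert_self _ _)
        rcases h2 u hu v hv huv hux hvx with h | h
        · exact Or.inl (Finset.mem_insert_of_mem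
            (Finset.mem_filter.2 ⟨(hBx u).2 ⟨hu, hux⟩, h⟩))
        · exact Or.inr (Finset.mem_insert_of_mem
            (Finset.mem_filter.2 ⟨(hBx v).2 ⟨hv, hvx⟩, h⟩))
    have hle := hmin _ hD
    have h3 := Finset.card_insert_le x D
    have h4 : D.card ≤ ∑ y ∈ Bx, d y := by
      calc D.card = ∑ y ∈ D, 1 := by simp
        _ ≤ ∑ y ∈ D, d y := Finset.sum_le_sum fun y hy => (Finset.mem_filter.1 hy).2
        _ ≤ ∑ y ∈ Bx, d y := Finset.sum_le_sum_of_subset (Finset.filter_subset _ _)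
    omega

/-! ### The core strategy on a cycle -/

section Ring

variable {G : SimpleGraph V} {B : Finset V} {X : Set V} (π : ℤ → V) (k : ℕ)

/-- The guard positions of the ring strategy in state `e`. -/
def ringD (e : ℤ) : Multiset V :=
  (Multiset.range (k + 1)).map (fun t : ℕ => π (e + 1 + 2 * t))

/-- The moves from state `e` to state `e + 2 * s`. -/
def ringM (e : ℤ) (s : ℕ) : Multiset (V × V) :=
  (Multiset.range (k + 1)).map
    (fun t : ℕ => (π (e + 1 + 2 * t), π (e + 1 + 2 * t + (if t < s then 1 else 0))))

open Classical in
/-- The doubled vertex in state `e`. -/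
noncomputable def ringH (e : ℤ) : Option V :=
  if π e = π (e + 1) then some (π e) else none

/-- The states of the ring strategy. -/
def ringStates : Set (Multiset V × Option V) :=
  {p | ∃ e : ℤ, p.1 + oM p.2 = ringD π k e ∧ p.2 = ringH π e}

variable {π k}

lemma ring_per_mul (per : ∀ i, π (i + (2 * k + 1)) = π i) (c : ℤ) (i : ℤ) :
    π (i + c * (2 * k + 1)) = π i := by
  induction c using Int.induction_on with
  | zero => simp
  | succ c ih =>
    rw [← ih, ← per (i + c * (2 * k + 1))]
    congr 1
    ring
  | pred c ih =>
    rw [← ih, ← per]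
    congr 1
    ring

lemma ringD_per (per : ∀ i, π (i + (2 * k + 1)) = π i) (c : ℤ) (e : ℤ) :
    ringD π k (e + c * (2 * k + 1)) = ringD π k e := by
  unfold ringD
  apply Multiset.map_congr rfl
  intro t _
  rw [← ring_per_mul per c (e + 1 + 2 * t)]
  congr 1
  ring

lemma ringH_per (per : ∀ i, π (i + (2 * k + 1)) = π i) (c : ℤ) (e : ℤ) :
    ringH π (e + c * (2 * k + 1)) = ringH π e := by
  unfold ringH
  have h1 := ring_per_mul per c e
  have h2 : π (e + c * (2 * k + 1) + 1) = π (e + 1) := by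
    rw [← ring_per_mul per c (e + 1)]
    congr 1
    ring
  rw [h1, h2]

lemma ringM_valid (per : ∀ i, π (i + (2 * k + 1)) = π i)
    (adj : ∀ i, π i = π (i + 1) ∨ G.Adj (π i) (π (i + 1))) (e : ℤ) {s : ℕ} (hs : s ≤ k) :
    ValidMove G (ringD π k e) (ringD π k (e + 2 * s)) (ringM π k e s) := by
  refine ⟨?_, ?_, ?_⟩
  · simp [ringM, ringD]
  · obtain ⟨r, hr⟩ : ∃ r, k + 1 = s + r := ⟨k + 1 - s, by omega⟩
    have hr' : k + 1 = r + s := by omega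
    have e1 : ringD π k (e + 2 * s) =
        (Multiset.range r).map (fun t : ℕ => π (e + 2 * s + 1 + 2 * t)) +
        (Multiset.range s).map (fun t : ℕ => π (e + 1 + 2 * t + 1)) := by
      unfold ringD
      rw [hr', Multiset.range_add, Multiset.map_add, Multiset.map_map]
      congr 1
      apply Multiset.map_congr rfl
      intro t _
      rw [Function.comp_apply, ← per (e + 1 + 2 * t + 1)]
      congr 1
      push_cast
      have : (k : ℤ) + 1 = s + r := by exact_mod_cast hr
      linarith
    rw [e1]
    unfold ringM
    rw [hr, Multiset.range_add, Multiset.map_add, Multiset.map_map, Multiset.map_add,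
      Multiset.map_map, Multiset.map_map, add_comm]
    congr 1
    · apply Multiset.map_congr rfl
      intro t _
      simp only [Function.comp_apply]
      congr 1
      rw [if_neg (by omega)]
      push_cast
      ring
    · apply Multiset.map_congr rfl
      intro t ht
      rw [Multiset.mem_range] at ht
      simp only [Function.comp_apply]
      rw [if_pos ht]
  · intro p hp
    unfold ringM at hp
    rw [Multiset.mem_map] at hp
    obtain ⟨t, _, rfl⟩ := hp
    by_cases h : t < s
    · simp only [if_pos h]
      exact adj _
    · simp only [if_neg h, add_zero]
      exact Or.inl trivial

lemma ValidMove.swap {C C' : Multiset V} {M : Multiset (V × V)} (h : ValidMove G C C' M) :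
    ValidMove G C' C (M.map Prod.swap) := by
  obtain ⟨h1, h2, h3⟩ := h
  refine ⟨by rw [Multiset.map_map]; exact h2, by rw [Multiset.map_map]; exact h1, ?_⟩
  intro p hp
  rw [Multiset.mem_map] at hp
  obtain ⟨q, hq, rfl⟩ := hp
  exact (h3 q hq).imp Eq.symm (fun h => h.symm)

open Classical in
lemma exists_remove {M : Multiset (V × V)} {h : Option V} (hh : ∀ y, h = some y → (y, y) ∈ M) :
    ∃ M', M = M' + diag (oM h) := by
  cases h with
  | none => exact ⟨M, by simp [diag, oM]⟩
  | some y =>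
    refine ⟨M.erase (y, y), ?_⟩
    rw [diag, oM, Multiset.map_singleton, add_comm, Multiset.singleton_add,
      Multiset.cons_erase (hh y rfl)]

open Classical in
lemma ring_strip {D D' : Multiset V} {M : Multiset (V × V)} {h h' : Option V}
    {O O' : Multiset V} (hM : ValidMove G D D' M)
    (hh : ∀ y, h = some y → (y, y) ∈ M) (hh' : ∀ y, h' = some y → (y, y) ∈ M)
    (hO : O + oM h = D) (hO' : O' + oM h' = D') :
    ∃ C C' M', ValidMove G C C' M' ∧ (∀ p ∈ M, p.1 ≠ p.2 → p ∈ M') ∧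
      ((h' = h ∧ C = O ∧ C' = O') ∨ (h' ≠ h ∧ C + oM h' = O ∧ C' + oM h = O')) := by
  have hdf : ∀ h : Option V, (diag (oM h)).map Prod.fst = oM h := fun h => (validMove_diag G _).1
  have hds : ∀ h : Option V, (diag (oM h)).map Prod.snd = oM h := fun h => (validMove_diag G _).2.1
  have hnd : ∀ h : Option V, ∀ p ∈ diag (oM h), p.1 = p.2 := by
    intro h p hp
    simp only [diag, Multiset.mem_map] at hp
    obtain ⟨v, _, rfl⟩ := hp
    rfl
  obtain ⟨M1, hM1⟩ := exists_remove hh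
  by_cases e : h' = h
  · subst e
    refine ⟨M1.map Prod.fst, M1.map Prod.snd, M1, ⟨rfl, rfl, ?_⟩, ?_, Or.inl ⟨rfl, ?_, ?_⟩⟩
    · intro p hp
      exact hM.2.2 p (by rw [hM1]; exact Multiset.mem_add.2 (Or.inl hp))
    · intro p hp hne
      rw [hM1] at hp
      rcases Multiset.mem_add.1 hp with hp | hp
      · exact hp
      · exact absurd (hnd _ p hp) hne
    · have := hM.1
      rw [hM1, Multiset.map_add, hdf, ← hO] at this
      exact add_right_cancel this
    · have := hM.2.1
      rw [hM1, Multiset.map_add, hds, ← hO'] at this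
      exact add_right_cancel this
  · have hh1 : ∀ y, h' = some y → (y, y) ∈ M1 := by
      intro y hy
      have := hh' y hy
      rw [hM1] at this
      rcases Multiset.mem_add.1 this with h1 | h1
      · exact h1
      · exfalso
        apply e
        cases h with
        | none => simp [diag, oM] at h1
        | some z =>
          simp only [diag, oM, Multiset.map_singleton, Multiset.mem_singleton,
            Prod.mk.injEq, and_self] at h1
          rw [hy, h1]
    obtain ⟨M2, hM2⟩ := exists_remove hh1
    refine ⟨M2.map Prod.fst, M2.map Prod.snd, M2, ⟨rfl, rfl, ?_⟩, ?_, Or.inr ⟨e, ?_, ?_⟩⟩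
    · intro p hp
      exact hM.2.2 p (by
        rw [hM1, hM2]; exact Multiset.mem_add.2 (Or.inl (Multiset.mem_add.2 (Or.inl hp))))
    · intro p hp hne
      rw [hM1, hM2] at hp
      rcases Multiset.mem_add.1 hp with hp | hp
      · rcases Multiset.mem_add.1 hp with hp | hp
        · exact hp
        · exact absurd (hnd _ p hp) hne
      · exact absurd (hnd _ p hp) hne
    · have := hM.1
      rw [hM1, hM2, Multiset.map_add, Multiset.map_add, hdf, hdf, ← hO] at this
      exact add_right_cancel this
    · have := hM.2.1
      rw [hM1, hM2, Multiset.map_add, Multiset.map_add, hds, hds, ← hO', add_right_comm] at this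
      exact add_right_cancel this

lemma ringM_mem_stay {e : ℤ} {s t : ℕ} (ht : t ≤ k) (hst : s ≤ t) :
    (π (e + 1 + 2 * t), π (e + 1 + 2 * t)) ∈ ringM π k e s := by
  unfold ringM
  rw [Multiset.mem_map]
  refine ⟨t, by rw [Multiset.mem_range]; omega, ?_⟩
  rw [if_neg (by omega), add_zero]

lemma ringM_mem_move {e : ℤ} {s t : ℕ} (ht : t ≤ k) (hst : t < s) :
    (π (e + 1 + 2 * t), π (e + 1 + 2 * t + 1)) ∈ ringM π k e s := by
  unfold ringM
  rw [Multiset.mem_map]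
  refine ⟨t, by rw [Multiset.mem_range]; omega, ?_⟩
  rw [if_pos hst]

lemma ringH_some {e : ℤ} {y : V} (h : ringH π e = some y) : π e = y ∧ π (e + 1) = y := by
  unfold ringH at h
  split_ifs at h with h1
  · simp only [Option.some.injEq] at h
    exact ⟨h, h1 ▸ h⟩

lemma ringM_h (per : ∀ i, π (i + (2 * k + 1)) = π i) {e : ℤ} {s : ℕ} (hs : s ≤ k) {y : V}
    (h : ringH π e = some y ∨ ringH π (e + 2 * s) = some y) : (y, y) ∈ ringM π k e s := by
  rcases h with h | h
  · have h1 := (ringH_some h).1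
    have := ringM_mem_stay (π := π) (k := k) (e := e) (s := s) (t := k) le_rfl hs
    rw [show e + 1 + 2 * (k : ℤ) = e + (2 * k + 1) by ring, per, h1] at this
    exact this
  · have h1 := (ringH_some h).2
    have := ringM_mem_stay (π := π) (k := k) (e := e) (s := s) (t := s) hs le_rfl
    rw [show e + 1 + 2 * (s : ℤ) = e + 2 * s + 1 by ring, h1] at this
    exact this

lemma ring_reach (e j : ℤ) : ∃ s : ℕ, s ≤ k ∧ ∃ c : ℤ,
    j + c * (2 * k + 1) = e + 2 * s ∨ e = j + c * (2 * k + 1) + 2 * s := by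
  have hm : (0 : ℤ) < 2 * k + 1 := by positivity
  have h1 := Int.emod_add_mul_ediv (j - e) (2 * k + 1)
  have h2 := Int.emod_nonneg (j - e) hm.ne'
  have h3 := Int.emod_lt_of_pos (j - e) hm
  set r := (j - e) % (2 * k + 1)
  set q := (j - e) / (2 * k + 1)
  obtain ⟨r', hr'⟩ := Int.eq_ofNat_of_zero_le h2
  rcases Nat.even_or_odd' r' with ⟨s, hs | hs⟩
  · refine ⟨s, by omega, -q, Or.inl ?_⟩
    have : r = 2 * s := by rw [hr', hs]; push_cast; ring
    linarith
  · refine ⟨k - s, by omega, -(q + 1), Or.inr ?_⟩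
    have hsk : s ≤ k := by omega
    have : r = 2 * s + 1 := by rw [hr', hs]; push_cast; ring
    push_cast [Nat.cast_sub hsk]
    linarith

lemma ringD_cov (per : ∀ i, π (i + (2 * k + 1)) = π i) (e j : ℤ) :
    (π j ∈ ringD π k e ∨ π (j + 1) ∈ ringD π k e) ∧
    ((π j ∉ ringD π k e) → ∃ t : ℕ, t < k ∧ ∃ c : ℤ, j + c * (2 * k + 1) = e + 2 + 2 * t) ∧
    ((π (j + 1) ∉ ringD π k e) →
      ∃ t : ℕ, t < k ∧ ∃ c : ℤ, j + c * (2 * k + 1) = e + 1 + 2 * t) := by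
  have hm : (0 : ℤ) < 2 * k + 1 := by positivity
  have h1 := Int.emod_add_mul_ediv (j - e) (2 * k + 1)
  have h2 := Int.emod_nonneg (j - e) hm.ne'
  have h3 := Int.emod_lt_of_pos (j - e) hm
  set r := (j - e) % (2 * k + 1)
  set q := (j - e) / (2 * k + 1)
  obtain ⟨r', hr'⟩ := Int.eq_ofNat_of_zero_le h2
  have hmem : ∀ (i : ℤ) (t : ℕ) (c : ℤ), t ≤ k → i + c * (2 * k + 1) = e + 1 + 2 * t →
      π i ∈ ringD π k e := by
    intro i t c ht hi
    unfold ringD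
    rw [Multiset.mem_map]
    refine ⟨t, by rw [Multiset.mem_range]; omega, ?_⟩
    rw [← hi, ring_per_mul per]
  rcases Nat.even_or_odd' r' with ⟨s, hs | hs⟩
  · have hr2 : r = 2 * s := by rw [hr', hs]; push_cast; ring
    have hA : π (j + 1) ∈ ringD π k e := hmem (j + 1) s (-q) (by omega) (by linarith)
    refine ⟨Or.inr hA, ?_, fun h => absurd hA h⟩
    intro hj
    rcases Nat.eq_zero_or_pos s with h0 | h0
    · exfalso
      apply hj
      apply hmem j k (1 - q) le_rfl
      rw [h0] at hr2
      push_cast at hr2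
      linarith
    · refine ⟨s - 1, by omega, -q, ?_⟩
      push_cast [Nat.cast_sub h0]
      linarith
  · have hr2 : r = 2 * s + 1 := by rw [hr', hs]; push_cast; ring
    have hA : π j ∈ ringD π k e := hmem j s (-q) (by omega) (by linarith)
    refine ⟨Or.inl hA, fun h => absurd hA h, ?_⟩
    intro _
    exact ⟨s, by omega, -q, by linarith⟩

theorem ring_core (hk : 1 ≤ k) (per : ∀ i, π (i + (2 * k + 1)) = π i)
    (adj : ∀ i, π i = π (i + 1) ∨ G.Adj (π i) (π (i + 1)))
    (edge : ∀ u ∈ B, ∀ v ∈ B, G.Adj u v →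
      ∃ j, (π j = u ∧ π (j + 1) = v) ∨ (π j = v ∧ π (j + 1) = u))
    (dupl : ∀ y ∈ X, ∃ j, π j = y ∧ π (j + 1) = y) (mem : ∀ i, π i ∈ B) :
    Core G B X (k + 1) (ringStates π k) := by
  classical
  have cardD : ∀ e, Multiset.card (ringD π k e) = k + 1 := by
    intro e
    simp [ringD]
  -- occupied vertices remain occupied after the doubled guard is removed
  have memO : ∀ O h, (O, h) ∈ ringStates π k → ∀ e : ℤ, O + oM h = ringD π k e →
      h = ringH π e → ∀ w ∈ ringD π k e, w ∈ O := by
    intro O h _ e h1 h2 w hw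
    cases h with
    | none =>
      rw [oM, add_zero] at h1
      rw [h1]
      exact hw
    | some y =>
      rw [← h1] at hw
      rcases Multiset.mem_add.1 hw with hw | hw
      · exact hw
      · rw [oM, Multiset.mem_singleton] at hw
        subst hw
        have hy := ringH_some h2.symm
        have : ringD π k e = {π (e + 1)} + ({π (e + 1 + 2 * k)} +
            (Multiset.range (k - 1)).map (fun t : ℕ => π (e + 1 + 2 * (t + 1 : ℕ)))) := by
          obtain ⟨l, rfl⟩ : ∃ l, k = l + 1 := ⟨k - 1, by omega⟩
          unfold ringD
          rw [show l + 1 + 1 = 1 + (l + 1) by ring, Multiset.range_add, Multiset.map_add,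
            Multiset.map_map, Multiset.range_succ l, Multiset.map_cons]
          have : Multiset.range 1 = {0} := rfl
          rw [this, Multiset.map_singleton]
          simp only [Function.comp_apply, Nat.add_sub_cancel, Multiset.singleton_add]
          congr 1
          · simp
          · congr 1
            · congr 1
              push_cast
              ring
            · apply Multiset.map_congr rfl
              intro t _
              rw [add_comm 1 t]
        rw [show e + 1 + 2 * (k : ℤ) = e + (2 * k + 1) by ring, per, hy.1, hy.2] at this
        rw [this, oM, add_comm] at h1
        rw [add_left_cancel h1]
        simp
  have full : ∀ O h (e e' : ℤ) M, O + oM h = ringD π k e → h = ringH π e →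
      ValidMove G (ringD π k e) (ringD π k e') M →
      (∀ y, ringH π e = some y ∨ ringH π e' = some y → (y, y) ∈ M) →
      ∃ O', (O', ringH π e') ∈ ringStates π k ∧
      ∃ C C' M', ValidMove G C C' M' ∧ (∀ p ∈ M, p.1 ≠ p.2 → p ∈ M') ∧
      ((ringH π e' = h ∧ C = O ∧ C' = O') ∨
        (ringH π e' ≠ h ∧ C + oM (ringH π e') = O ∧ C' + oM h = O')) := by
    intro O h e e' M h1 h2 hM hy
    have : ∃ O', O' + oM (ringH π e') = ringD π k e' := by
      cases hh : ringH π e' with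
      | none => exact ⟨ringD π k e', by simp [oM]⟩
      | some y =>
        have hyM := hy y (Or.inr hh)
        have : y ∈ ringD π k e' := by
          rw [← hM.2.1, Multiset.mem_map]
          exact ⟨_, hyM, rfl⟩
        refine ⟨(ringD π k e').erase y, ?_⟩
        rw [oM, add_comm, Multiset.singleton_add, Multiset.cons_erase this]
    obtain ⟨O', hO'⟩ := this
    obtain ⟨C, C', M', g1, g2, g3⟩ := ring_strip (h := h) (h' := ringH π e') hM
      (fun y e1 => hy y (Or.inl (h2 ▸ e1))) (fun y e1 => hy y (Or.inr e1)) h1 hO'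
    exact ⟨O', ⟨e', hO', rfl⟩, C, C', M', g1, g2, g3⟩
  have swapMem : ∀ (M : Multiset (V × V)) (u v : V), (u, v) ∈ M → (v, u) ∈ M.map Prod.swap := by
    intro M u v h
    rw [Multiset.mem_map]
    exact ⟨_, h, rfl⟩
  have sym : ∀ (e e' : ℤ) (s : ℕ), s ≤ k → e = e' + 2 * s →
      ValidMove G (ringD π k e) (ringD π k e') ((ringM π k e' s).map Prod.swap) ∧
      (∀ y, ringH π e = some y ∨ ringH π e' = some y →
        (y, y) ∈ (ringM π k e' s).map Prod.swap) := by
    rintro e e' s hs rfl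
    exact ⟨(ringM_valid per adj e' hs).swap, fun y hy => swapMem _ _ _ (ringM_h per hs hy.symm)⟩
  have covO : ∀ O h, (O, h) ∈ ringStates π k → ∀ j, π j ∈ O ∨ π (j + 1) ∈ O := by
    rintro O h hO j
    obtain ⟨e, h1, h2⟩ := id hO
    exact (ringD_cov per e j).1.imp (memO O h hO e h1 h2 _) (memO O h hO e h1 h2 _)
  constructor
  · have hz : ∀ y, ringH π 0 = some y → y ∈ ringD π k 0 := by
      intro y hy
      rw [← (ringM_valid per adj 0 (Nat.zero_le k)).1, Multiset.mem_map]
      exact ⟨(y, y), ringM_h per (Nat.zero_le k) (Or.inl hy), rfl⟩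
    cases hh : ringH π 0 with
    | none => exact ⟨(ringD π k 0, none), 0, by simp [oM], hh.symm⟩
    | some y =>
      refine ⟨((ringD π k 0).erase y, some y), 0, ?_, hh.symm⟩
      rw [oM, add_comm, Multiset.singleton_add, Multiset.cons_erase (hz y hh)]
  · rintro O h ⟨e, h1, h2⟩
    have := congrArg Multiset.card h1
    rwa [Multiset.card_add, cardD] at this
  · intro O h hO u hu v hv huv
    obtain ⟨j, ⟨rfl, rfl⟩ | ⟨rfl, rfl⟩⟩ := edge u hu v hv huv
    · exact covO O h hO j
    · exact (covO O h hO j).symm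
  · intro O h hO y hy
    obtain ⟨j, h1, h2⟩ := dupl y hy
    rcases covO O h hO j with h | h
    · rwa [h1] at h
    · rwa [h2] at h
  · intro O y hO
    obtain ⟨e, h1, h2⟩ := id hO
    have hy := ringH_some h2.symm
    refine ⟨hy.1 ▸ mem e, ?_⟩
    rcases covO O _ hO e with h | h
    · rwa [hy.1] at h
    · rwa [hy.2] at h
  · rintro O h ⟨e, h1, h2⟩ y hy hne
    obtain ⟨j, hj1, hj2⟩ := dupl y hy
    obtain ⟨s, hs, c, hc⟩ := ring_reach (k := k) e j
    have hH : ringH π (j + c * (2 * k + 1)) = some y := by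
      rw [ringH_per per]
      unfold ringH
      rw [if_pos (hj1.trans hj2.symm), hj1]
    have : ∃ M, ValidMove G (ringD π k e) (ringD π k (j + c * (2 * k + 1))) M ∧
        (∀ y, ringH π e = some y ∨ ringH π (j + c * (2 * k + 1)) = some y → (y, y) ∈ M) := by
      rcases hc with hc | hc
      · rw [hc]
        exact ⟨_, ringM_valid per adj e hs, fun y hy => ringM_h per hs hy⟩
      · exact ⟨_, sym _ _ s hs hc⟩
    obtain ⟨M, hM, hM'⟩ := this
    obtain ⟨O', hO', C, C', M', g1, -, g3⟩ := full O h e _ M h1 h2 hM hM'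
    rw [hH] at hO' g3
    rcases g3 with g3 | g3
    · exact absurd g3.1.symm hne
    · exact ⟨O', hO', C, C', M', g1, g3.2.1, g3.2.2⟩
  · intro O h hO
    obtain ⟨e, h1, h2⟩ := id hO
    have key : ∀ j, G.Adj (π j) (π (j + 1)) → ∃ O' h', (O', h') ∈ ringStates π k ∧
        ∃ C C' M, ValidMove G C C' M ∧ Hit M (π j) (π (j + 1)) ∧
        ((h' = h ∧ C = O ∧ C' = O') ∨ (h' ≠ h ∧ C + oM h' = O ∧ C' + oM h = O')) := by
      intro j hj
      by_cases hA : π j ∈ O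
      · by_cases hB : π (j + 1) ∈ O
        · obtain ⟨M, hM, hit⟩ := swap_move (G := G) hA hB hj
          exact ⟨O, h, hO, O, O, M, hM, hit, Or.inl ⟨rfl, rfl, rfl⟩⟩
        · obtain ⟨t, ht, c, hc⟩ := (ringD_cov per e j).2.2
            (fun h3 => hB (memO O h hO e h1 h2 _ h3))
          obtain ⟨O', hO', C, C', M', g1, g2, g3⟩ := full O h e _ _ h1 h2
            (ringM_valid per adj e le_rfl) (fun y hy => ringM_h per le_rfl hy)
          refine ⟨O', _, hO', C, C', M', g1, Or.inl (g2 _ ?_ hj.ne), g3⟩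
          have := ringM_mem_move (π := π) (k := k) (e := e) (s := k) ht.le ht
          rw [← hc, ring_per_mul per, add_right_comm, ring_per_mul per] at this
          exact this
      · obtain ⟨t, ht, c, hc⟩ := (ringD_cov per e j).2.1
            (fun h3 => hA (memO O h hO e h1 h2 _ h3))
        obtain ⟨hs1, hs2⟩ := sym e (e - 2 * k) k le_rfl (by ring)
        obtain ⟨O', hO', C, C', M', g1, g2, g3⟩ := full O h e _ _ h1 h2 hs1 hs2
        refine ⟨O', _, hO', C, C', M', g1, Or.inr (g2 _ (swapMem _ _ _ ?_) hj.ne'), g3⟩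
        have := ringM_mem_move (π := π) (k := k) (e := e - 2 * k) (s := k) ht.le ht
        rw [show e - 2 * (k : ℤ) + 1 + 2 * t = j + (c - 1) * (2 * k + 1) by linarith,
          ring_per_mul per, add_right_comm, ring_per_mul per] at this
        exact this
    intro u hu v hv huv
    obtain ⟨j, ⟨rfl, rfl⟩ | ⟨rfl, rfl⟩⟩ := edge u hu v hv huv
    · exact key j huv
    · obtain ⟨O', h', hO', C, C', M, hM, hit, hc⟩ := key j huv.symm
      exact ⟨O', h', hO', C, C', M, hM, hit.symm, hc⟩

end Ring

open Classical in
lemma dup_seq (w : ℕ → V) (D : Set V) : ∀ n, ∃ (N : ℕ) (σ : ℕ → V),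
    N = n + ((Finset.range n).filter (fun i => w i ∈ D)).card ∧ σ 0 = w 0 ∧ σ N = w n ∧
    (∀ j < N, σ j = σ (j + 1) ∨ ∃ i < n, σ j = w i ∧ σ (j + 1) = w (i + 1)) ∧
    (∀ j < N, ∃ i < n, σ j = w i) ∧
    (∀ i < n, ∃ j < N, σ j = w i ∧ σ (j + 1) = w (i + 1)) ∧
    (∀ i < n, w i ∈ D → ∃ j < N, σ j = w i ∧ σ (j + 1) = w i) := by
  intro n
  induction n with
  | zero => exact ⟨0, w, by simp⟩
  | succ n ih =>
    obtain ⟨N, σ, hN, h0, hl, hc, hm, he, hd⟩ := ih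
    rw [Finset.range_add_one, Finset.filter_insert]
    by_cases hD : w n ∈ D
    · rw [if_pos hD, Finset.card_insert_of_notMem (by simp)]
      let τ : ℕ → V := fun t => if t ≤ N then σ t else if t = N + 1 then w n else w (n + 1)
      have t1 : ∀ t ≤ N, τ t = σ t := fun t ht => if_pos ht
      have t2 : τ (N + 1) = w n := by simp [τ]
      have t3 : τ (N + 2) = w (n + 1) := by simp [τ]
      refine ⟨N + 2, τ, by omega, by rw [t1 0 (Nat.zero_le _), h0], t3, ?_, ?_, ?_, ?_⟩
      · intro j hj
        rcases Nat.lt_or_ge j N with h | h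
        · rw [t1 j h.le, t1 (j + 1) h]
          rcases hc j h with h | ⟨i, hi, h⟩
          · exact Or.inl h
          · exact Or.inr ⟨i, by omega, h⟩
        · rcases (by omega : j = N ∨ j = N + 1) with rfl | rfl
          · left; rw [t1 j le_rfl, t2, hl]
          · right; exact ⟨n, by omega, t2, t3⟩
      · intro j hj
        rcases Nat.lt_or_ge j N with h | h
        · rw [t1 j h.le]
          obtain ⟨i, hi, h⟩ := hm j h
          exact ⟨i, by omega, h⟩
        · rcases (by omega : j = N ∨ j = N + 1) with rfl | rfl
          · exact ⟨n, by omega, by rw [t1 j le_rfl, hl]⟩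
          · exact ⟨n, by omega, t2⟩
      · intro i hi
        rcases Nat.lt_or_ge i n with h | h
        · obtain ⟨j, hj, e1, e2⟩ := he i h
          exact ⟨j, by omega, by rw [t1 j hj.le, e1], by rw [t1 _ hj, e2]⟩
        · have : i = n := by omega
          subst this
          exact ⟨N + 1, by omega, t2, t3⟩
      · intro i hi hiD
        rcases Nat.lt_or_ge i n with h | h
        · obtain ⟨j, hj, e1, e2⟩ := hd i h hiD
          exact ⟨j, by omega, by rw [t1 j hj.le, e1], by rw [t1 _ hj, e2]⟩
        · have : i = n := by omega
          subst this
          exact ⟨N, by omega, by rw [t1 N le_rfl, hl], t2⟩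
    · rw [if_neg hD]
      let τ : ℕ → V := fun t => if t ≤ N then σ t else w (n + 1)
      have t1 : ∀ t ≤ N, τ t = σ t := fun t ht => if_pos ht
      have t3 : τ (N + 1) = w (n + 1) := by simp [τ]
      refine ⟨N + 1, τ, by omega, by rw [t1 0 (Nat.zero_le _), h0], t3, ?_, ?_, ?_, ?_⟩
      · intro j hj
        rcases Nat.lt_or_ge j N with h | h
        · rw [t1 j h.le, t1 (j + 1) h]
          rcases hc j h with h | ⟨i, hi, h⟩
          · exact Or.inl h
          · exact Or.inr ⟨i, by omega, h⟩
        · have : j = N := by omega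
          subst this
          right; exact ⟨n, by omega, by rw [t1 j le_rfl, hl], t3⟩
      · intro j hj
        rcases Nat.lt_or_ge j N with h | h
        · rw [t1 j h.le]
          obtain ⟨i, hi, h⟩ := hm j h
          exact ⟨i, by omega, h⟩
        · have : j = N := by omega
          subst this
          exact ⟨n, by omega, by rw [t1 j le_rfl, hl]⟩
      · intro i hi
        rcases Nat.lt_or_ge i n with h | h
        · obtain ⟨j, hj, e1, e2⟩ := he i h
          exact ⟨j, by omega, by rw [t1 j hj.le, e1], by rw [t1 _ hj, e2]⟩
        · have : i = n := by omega
          subst this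
          exact ⟨N, by omega, by rw [t1 N le_rfl, hl], t3⟩
      · intro i hi hiD
        rcases Nat.lt_or_ge i n with h | h
        · obtain ⟨j, hj, e1, e2⟩ := hd i h hiD
          exact ⟨j, by omega, by rw [t1 j hj.le, e1], by rw [t1 _ hj, e2]⟩
        · have : i = n := by omega
          subst this
          exact absurd hiD hD

lemma last_bad (χ : ℕ → Prop) : ∀ t, (∀ i < t, χ i) ∨
    ∃ q < t, ¬ χ q ∧ ∀ i, q < i → i < t → χ i := by
  intro t
  induction t with
  | zero => left; intro i hi; omega
  | succ t ih =>
    by_cases ht : χ t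
    · rcases ih with h | ⟨q, hq, h1, h2⟩
      · left
        intro i hi
        rcases (by omega : i < t ∨ i = t) with h' | rfl
        · exact h i h'
        · exact ht
      · right
        refine ⟨q, by omega, h1, fun i hi hi' => ?_⟩
        rcases (by omega : i < t ∨ i = t) with h' | rfl
        · exact h2 i hi h'
        · exact ht
    · right
      exact ⟨t, by omega, ht, fun i hi hi' => by omega⟩

open Classical in
lemma ring_numeric (χ : ℕ → Prop) (δ : ℕ → ℕ) (n : ℕ) (h1 : ∀ i < n, χ i → 1 ≤ δ i)
    (h2 : ∀ q t, q < t → t < n → ¬ χ q → ¬ χ t → δ q = 0 → δ t = 0 →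
      (∀ i, q < i → i < t → χ i) → ∃ i, q < i ∧ i < t ∧ 2 ≤ δ i) :
    ∀ t ≤ n, (∑ i ∈ Finset.range t, if χ i then 1 else 0) +
      (∑ i ∈ Finset.range t, if χ i then 0 else 1) / 2 ≤ ∑ i ∈ Finset.range t, δ i := by
  intro t
  induction t using Nat.strong_induction_on with
  | _ t ih =>
    intro ht
    rcases Nat.eq_zero_or_pos t with rfl | hpos
    · simp
    obtain ⟨t, rfl⟩ : ∃ s, t = s + 1 := ⟨t - 1, by omega⟩
    have ih1 := ih t (by omega) (by omega)
    rw [Finset.sum_range_succ, Finset.sum_range_succ, Finset.sum_range_succ]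
    by_cases hχ : χ t
    · have := h1 t (by omega) hχ
      simp only [if_pos hχ]
      omega
    simp only [if_neg hχ]
    by_cases hδ : 1 ≤ δ t
    · omega
    have hδ0 : δ t = 0 := by omega
    rcases last_bad χ t with h | ⟨q, hq, hq1, hq2⟩
    · have : (∑ i ∈ Finset.range t, if χ i then 0 else 1) = 0 := by
        apply Finset.sum_eq_zero
        intro i hi
        rw [if_pos (h i (Finset.mem_range.1 hi))]
      rw [this] at ih1 ⊢
      omega
    · have ihq := ih q (by omega) (by omega)
      have split : ∀ f : ℕ → ℕ, ∑ i ∈ Finset.range t, f i =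
          ∑ i ∈ Finset.range q, f i + f q + ∑ i ∈ Finset.Ico (q + 1) t, f i := by
        intro f
        rw [← Finset.sum_range_succ, Finset.sum_range_add_sum_Ico f (by omega : q + 1 ≤ t)]
      rw [split, split, split]
      have hc : ∀ i ∈ Finset.Ico (q + 1) t, χ i := by
        intro i hi
        rw [Finset.mem_Ico] at hi
        exact hq2 i (by omega) hi.2
      have e1 : (∑ i ∈ Finset.Ico (q + 1) t, if χ i then 1 else 0) = t - (q + 1) := by
        rw [Finset.sum_congr rfl (fun i hi => if_pos (hc i hi))]
        simp
      have e2 : (∑ i ∈ Finset.Ico (q + 1) t, if χ i then 0 else 1) = 0 := by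
        rw [Finset.sum_congr rfl (fun i hi => if_pos (hc i hi))]
        simp
      have e3 : t - (q + 1) ≤ ∑ i ∈ Finset.Ico (q + 1) t, δ i := by
        rw [← e1]
        apply Finset.sum_le_sum
        intro i hi
        rw [if_pos (hc i hi)]
        rw [Finset.mem_Ico] at hi
        exact h1 i (by omega) (hq2 i (by omega) hi.2)
      have e4 : t - (q + 1) + 1 ≤ δ q + ∑ i ∈ Finset.Ico (q + 1) t, δ i := by
        by_cases hδq : 1 ≤ δ q
        · omega
        · obtain ⟨i, hi1, hi2, hi3⟩ := h2 q t hq (by omega) hq1 hχ (by omega) hδ0 hq2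
          have : ∑ j ∈ Finset.Ico (q + 1) t, (if χ j then 1 else 0) <
              ∑ j ∈ Finset.Ico (q + 1) t, δ j := by
            apply Finset.sum_lt_sum
            · intro j hj
              rw [if_pos (hc j hj)]
              rw [Finset.mem_Ico] at hj
              exact h1 j (by omega) (hq2 j (by omega) hj.2)
            · refine ⟨i, Finset.mem_Ico.2 ⟨by omega, hi2⟩, ?_⟩
              rw [if_pos (hq2 i hi1 hi2)]
              omega
          omega
      rw [e1, e2, if_neg hq1, if_neg hq1]
      omega

open Classical in
theorem ring_block {G : SimpleGraph V} {B : Finset V} {X : Set V} {x : V} {n : ℕ} (hn : 3 ≤ n)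
    {w : ℕ → V} (w0 : w 0 = x) (wn : w n = x) (hadj : ∀ i < n, G.Adj (w i) (w (i + 1)))
    (inj : ∀ i < n, ∀ j < n, w i = w j → i = j) (hB : ∀ v, v ∈ B ↔ ∃ i < n, w i = v)
    (hedge : ∀ u ∈ B, ∀ v ∈ B, G.Adj u v →
      ∃ i < n, (w i = u ∧ w (i + 1) = v) ∨ (w i = v ∧ w (i + 1) = u))
    (hXB : ∀ y ∈ X, y ∈ B) (hx : x ∈ X) (hne : ∃ v ∈ B, v ∉ X) : BlockGoal G B X x := by
  have hcnt : ∃ D : Set V, X ⊆ D ∧ n + ((Finset.range n).filter (fun i => w i ∈ D)).card =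
      2 * ((n + ((Finset.range n).filter (fun i => w i ∈ X)).card) / 2) + 1 := by
    by_cases hpar : (n + ((Finset.range n).filter (fun i => w i ∈ X)).card) % 2 = 1
    · exact ⟨X, le_rfl, by omega⟩
    · obtain ⟨v, hv, hvX⟩ := hne
      obtain ⟨i0, hi0, hw0⟩ := (hB v).1 hv
      obtain ⟨E, hE⟩ : ∃ E : Set V, E = insert v X := ⟨_, rfl⟩
      refine ⟨E, hE ▸ Set.subset_insert _ _, ?_⟩
      have : (Finset.range n).filter (fun i => w i ∈ E) =
          insert i0 ((Finset.range n).filter (fun i => w i ∈ X)) := by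
        ext i
        simp only [hE, Finset.mem_filter, Finset.mem_range, Set.mem_insert_iff, Finset.mem_insert]
        constructor
        · rintro ⟨h1, h2 | h2⟩
          · exact Or.inl (inj i h1 i0 hi0 (h2.trans hw0.symm))
          · exact Or.inr ⟨h1, h2⟩
        · rintro (rfl | ⟨h1, h2⟩)
          · exact ⟨hi0, Or.inl hw0⟩
          · exact ⟨h1, Or.inr h2⟩
      rw [this, Finset.card_insert_of_notMem]
      · omega
      · simp only [Finset.mem_filter, Finset.mem_range, not_and]
        intro _
        rwa [hw0]
  obtain ⟨D, hXD, hk⟩ := hcnt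
  set k := (n + ((Finset.range n).filter (fun i => w i ∈ X)).card) / 2 with hkdef
  obtain ⟨N, σ, hN, s0, sN, hc, hm, he, hd⟩ := dup_seq w D n
  have hN2 : N = 2 * k + 1 := by omega
  have hNpos : (0 : ℤ) < 2 * k + 1 := by positivity
  have hs : σ N = σ 0 := by rw [sN, s0, w0, wn]
  have hstep : ∀ i : ℤ, ∃ r < N, σ (i % (2 * k + 1)).toNat = σ r ∧
      σ ((i + 1) % (2 * k + 1)).toNat = σ (r + 1) := by
    intro i
    have b1 := Int.emod_nonneg i hNpos.ne'
    have b2 := Int.emod_lt_of_pos i hNpos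
    refine ⟨(i % (2 * k + 1)).toNat, by omega, rfl, ?_⟩
    rcases (by omega : i % (2 * k + 1) + 1 < 2 * k + 1 ∨ i % (2 * k + 1) + 1 = 2 * k + 1)
      with h | h
    · have : (i + 1) % (2 * k + 1) = i % (2 * k + 1) + 1 := by
        rw [Int.add_emod, Int.emod_eq_of_lt (a := 1) (by omega) (by omega)]
        exact Int.emod_eq_of_lt (by omega) h
      rw [this]
      congr 1
      omega
    · have : (i + 1) % (2 * k + 1) = 0 := by
        have h3 : i + 1 = (2 * k + 1) * (i / (2 * k + 1) + 1) := by
          have := Int.emod_add_mul_ediv i (2 * k + 1)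
          linarith
        rw [h3]
        exact Int.mul_emod_right _ _
      rw [this]
      have h4 : (i % (2 * k + 1)).toNat + 1 = N := by omega
      rw [h4, hs]
      rfl
  have hnat : ∀ j < N, σ ((j : ℤ) % (2 * k + 1)).toNat = σ j ∧
      σ (((j : ℤ) + 1) % (2 * k + 1)).toNat = σ (j + 1) := by
    intro j hj
    obtain ⟨r, hr, e1, e2⟩ := hstep j
    have h1 : (j : ℤ) % (2 * k + 1) = j := Int.emod_eq_of_lt (by omega) (by omega)
    refine ⟨by rw [h1]; rfl, ?_⟩
    rcases (by omega : j + 1 < N ∨ j + 1 = N) with h | h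
    · have h2 : ((j : ℤ) + 1) % (2 * k + 1) = (j + 1 : ℕ) :=
        Int.emod_eq_of_lt (by omega) (by omega)
      rw [h2]; rfl
    · have h2 : ((j : ℤ) + 1) = 2 * k + 1 := by omega
      rw [h2, Int.emod_self, h, hs]; rfl
  have hcore : Core G B X (k + 1) (ringStates (fun i : ℤ => σ (i % (2 * k + 1)).toNat) k) := by
    apply ring_core
    · omega
    · intro i
      simp
    · intro i
      obtain ⟨r, hr, e1, e2⟩ := hstep i
      rw [e1, e2]
      rcases hc r hr with h | ⟨j, hj, h3, h4⟩
      · exact Or.inl h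
      · right
        rw [h3, h4]
        exact hadj j hj
    · intro u hu v hv huv
      obtain ⟨i, hi, h⟩ := hedge u hu v hv huv
      obtain ⟨j, hj, e1, e2⟩ := he i hi
      obtain ⟨f1, f2⟩ := hnat j hj
      refine ⟨j, ?_⟩
      rw [f1, f2, e1, e2]
      exact h
    · intro y hy
      obtain ⟨i, hi, rfl⟩ := (hB y).1 (hXB y hy)
      obtain ⟨j, hj, e1, e2⟩ := hd i hi (hXD hy)
      obtain ⟨f1, f2⟩ := hnat j hj
      exact ⟨j, by rw [f1, e1], by rw [f2, e2]⟩
    · intro i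
      obtain ⟨r, hr, e1, e2⟩ := hstep i
      rw [e1]
      obtain ⟨j, hj, h⟩ := hm r hr
      exact (hB _).2 ⟨j, hj, h.symm⟩
  refine ⟨k + 1, _, hcore, ?_⟩
  intro d d1 d2 d3 Bx hBx
  have hnx : ∀ i, 0 < i → i < n → w i ≠ x := by
    intro i h1 h2 h3
    have := inj i h2 0 (by omega) (h3.trans w0.symm)
    omega
  have hnum := ring_numeric (fun i => w (i + 1) ∈ X) (fun i => d (w (i + 1))) (n - 1)
    (fun i hi h => d1 _ h (hnx _ (by omega) (by omega))) ?_ (n - 1) le_rfl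
  · have hp : (∑ i ∈ Finset.range (n - 1), if w (i + 1) ∈ X then 1 else 0) + 1 =
        ((Finset.range n).filter (fun i => w i ∈ X)).card := by
      rw [Finset.card_filter]
      obtain ⟨l, rfl⟩ : ∃ l, n = l + 1 := ⟨n - 1, by omega⟩
      rw [Finset.sum_range_succ', if_pos (w0.symm ▸ hx)]
      rfl
    have hpc : (∑ i ∈ Finset.range (n - 1), if w (i + 1) ∈ X then 1 else 0) +
        (∑ i ∈ Finset.range (n - 1), if w (i + 1) ∈ X then 0 else 1) = n - 1 := by
      rw [← Finset.sum_add_distrib]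
      rw [Finset.sum_congr rfl (g := fun _ => 1)]
      · simp
      · intro i _
        split_ifs <;> rfl
    have hsum : ∑ i ∈ Finset.range (n - 1), d (w (i + 1)) ≤ ∑ y ∈ Bx, d y := by
      rw [← Finset.sum_image (s := Finset.range (n - 1)) (g := fun i => w (i + 1)) (f := d)]
      · apply Finset.sum_le_sum_of_subset
        intro y hy
        rw [Finset.mem_image] at hy
        obtain ⟨i, hi, rfl⟩ := hy
        rw [Finset.mem_range] at hi
        exact (hBx _).2 ⟨(hB _).2 ⟨i + 1, by omega, rfl⟩, hnx _ (by omega) (by omega)⟩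
      · intro i hi j hj hij
        simp only [Finset.coe_range, Set.mem_Iio] at hi hj
        have := inj _ (by omega) _ (by omega) hij
        omega
    omega
  · intro q t hqt ht hq hχt hδq hδt hmid
    have hBm : ∀ i < n, w i ∈ B := fun i hi => (hB _).2 ⟨i, hi, rfl⟩
    rcases (by omega : t = q + 1 ∨ q + 2 ≤ t) with rfl | hqt2
    · exfalso
      rcases d2 _ (hBm (q + 1) (by omega)) _ (hBm (q + 1 + 1) (by omega))
        (hadj (q + 1) (by omega)) (hnx _ (by omega) (by omega)) (hnx _ (by omega) (by omega))
        with h | h <;> omega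
    · have hk3 : ∃ y ∈ (Finset.Ico (q + 2) (t + 1)).image w, 2 ≤ d y := by
        refine d3 ((Finset.Ico (q + 2) (t + 1)).image w) ?_ (w t) ?_ (w (t + 1))
          (hBm _ (by omega)) ?_ (hadj t (by omega)) ?_
        · intro y hy
          rw [Finset.mem_image] at hy
          obtain ⟨i, hi, rfl⟩ := hy
          rw [Finset.mem_Ico] at hi
          refine ⟨?_, hnx i (by omega) (by omega)⟩
          have := hmid (i - 1) (by omega) (by omega)
          rwa [Nat.sub_add_cancel (by omega)] at this
        · rw [Finset.mem_image]
          exact ⟨t, Finset.mem_Ico.2 ⟨by omega, by omega⟩, rfl⟩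
        · rw [Finset.mem_image]
          rintro ⟨i, hi, h⟩
          rw [Finset.mem_Ico] at hi
          have := inj i (by omega) (t + 1) (by omega) h
          omega
        · intro y hy u hu hyu
          rw [Finset.mem_image] at hy
          obtain ⟨i, hi, rfl⟩ := hy
          rw [Finset.mem_Ico] at hi
          have hfin : ∀ j, q + 1 ≤ j → j ≤ t + 1 → w j = u →
              u ∈ (Finset.Ico (q + 2) (t + 1)).image w ∨ (u ≠ x ∧ u ∉ X ∧ d u = 0) := by
            rintro j hj1 hj2 rfl
            rcases (by omega : j = q + 1 ∨ j = t + 1 ∨ (q + 2 ≤ j ∧ j < t + 1)) with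
              rfl | rfl | ⟨h1, h2⟩
            · exact Or.inr ⟨hnx _ (by omega) (by omega), hq, hδq⟩
            · exact Or.inr ⟨hnx _ (by omega) (by omega), hχt, hδt⟩
            · exact Or.inl (Finset.mem_image.2 ⟨j, Finset.mem_Ico.2 ⟨h1, h2⟩, rfl⟩)
          obtain ⟨i', hi', ⟨e1, e2⟩ | ⟨e1, e2⟩⟩ := hedge _ (hBm i (by omega)) u hu hyu
          · have := inj i' hi' i (by omega) e1
            subst this
            exact hfin (i' + 1) (by omega) (by omega) e2
          · have hlt : i' + 1 < n := by
              by_contra hcon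
              have : i' + 1 = n := by omega
              rw [this, wn] at e2
              exact hnx i (by omega) (by omega) e2.symm
            have := inj _ hlt i (by omega) e2
            exact hfin i' (by omega) (by omega) e1
      · obtain ⟨y, hy, hy2⟩ := hk3
        rw [Finset.mem_image] at hy
        obtain ⟨i, hi, rfl⟩ := hy
        rw [Finset.mem_Ico] at hi
        refine ⟨i - 1, by omega, by omega, ?_⟩
        rwa [Nat.sub_add_cancel (by omega)]

/-! ### Blocks -/

theorem cycle_seq {G : SimpleGraph V} {S : Set V} (h : IsCycleSet G S) {x : V} (hx : x ∈ S) :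
    ∃ (n : ℕ) (w : ℕ → V), 3 ≤ n ∧ w 0 = x ∧ w n = x ∧ (∀ i < n, G.Adj (w i) (w (i + 1))) ∧
      (∀ i < n, ∀ j < n, w i = w j → i = j) ∧ (∀ v, v ∈ S ↔ ∃ i < n, w i = v) ∧
      (∀ u ∈ S, ∀ v ∈ S, G.Adj u v →
        ∃ i < n, (w i = u ∧ w (i + 1) = v) ∨ (w i = v ∧ w (i + 1) = u)) := by
  classical
  obtain ⟨a, c, hc, rfl, hch⟩ := h
  have hx' : x ∈ c.support := hx
  have hc' : (c.rotate x hx').IsCycle := hc.rotate hx'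
  have hedges : ∀ e, e ∈ (c.rotate x hx').edges ↔ e ∈ c.edges :=
    fun e => (c.rotate_edges x hx').mem_iff
  have hsup : ∀ v, v ∈ (c.rotate x hx').support ↔ v ∈ c.support := by
    intro v
    have := congrArg (fun s : G.Subgraph => v ∈ s.verts) (c.toSubgraph_rotate hx')
    simpa using this
  generalize c.rotate x hx' = c' at hc' hedges hsup
  have h3 := hc'.three_le_length
  refine ⟨c'.length, c'.getVert, h3, by simp, by simp, fun i hi => c'.adj_getVert_succ hi,
    ?_, ?_, ?_⟩
  · intro i hi j hj hij
    exact hc'.getVert_injOn' (by simp only [Set.mem_ofPred_eq]; omega)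
      (by simp only [Set.mem_ofPred_eq]; omega) hij
  · intro v
    rw [Set.mem_ofPred_eq, ← hsup, Walk.mem_support_iff_exists_getVert]
    constructor
    · rintro ⟨n, hn, hle⟩
      rcases lt_or_eq_of_le hle with hlt | heq
      · exact ⟨n, hlt, hn⟩
      · refine ⟨0, by omega, ?_⟩
        rw [← hn, heq]
        simp
    · rintro ⟨i, hi, h⟩
      exact ⟨i, h, hi.le⟩
  · intro u hu v hv huv
    have := (hedges _).2 (hch u v hu hv huv)
    rw [← Walk.adj_toSubgraph_iff_mem_edges, Walk.toSubgraph_adj_iff] at this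
    obtain ⟨i, hi, hlt⟩ := this
    refine ⟨i, hlt, ?_⟩
    rw [Sym2.eq_iff] at hi
    exact hi

lemma reach_iff {W : Type} {G : SimpleGraph V} {H : SimpleGraph W} {f : W → V} {T : Set V}
    (hf : Function.Injective f) (hadj : ∀ a b, H.Adj a b ↔ G.Adj (f a) (f b))
    (hT : ∀ v, v ∈ T ↔ ∃ a, f a = v) (a b : W) : H.Reachable a b ↔ RT G T (f a) (f b) := by
  constructor
  · rintro ⟨p⟩
    induction p with
    | nil => exact Relation.ReflTransGen.refl
    | @cons u v w h p ih =>
      exact (RT.step ((hadj _ _).1 h) ((hT _).2 ⟨_, rfl⟩) ((hT _).2 ⟨_, rfl⟩)).trans ih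
  · intro h
    have key : ∀ v, RT G T (f a) v → ∃ b, f b = v ∧ H.Reachable a b := by
      intro v hv
      induction hv with
      | refl => exact ⟨a, rfl, Reachable.refl _⟩
      | @tail c d _ hcd ih =>
        obtain ⟨b', rfl, hb'⟩ := ih
        obtain ⟨d', rfl⟩ := (hT d).1 hcd.2.2
        exact ⟨d', rfl, hb'.trans ((hadj _ _).2 hcd.1).reachable⟩
    obtain ⟨b', hb, hr⟩ := key _ h
    rwa [← hf hb]

lemma induce_reach {G : SimpleGraph V} {S : Set V} (u v : S) :
    (G.induce S).Reachable u v ↔ RT G S u.1 v.1 :=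
  reach_iff (f := fun a : S => a.1) Subtype.val_injective (fun _ _ => Iff.rfl)
    (fun v => ⟨fun h => ⟨⟨v, h⟩, rfl⟩, fun ⟨a, h⟩ => h ▸ a.2⟩) u v

lemma del_reach {G : SimpleGraph V} {S : Set V} (y : S) (u v : {v : S | v ≠ y}) :
    (delVert (G.induce S) y).Reachable u v ↔ RT G (S \ {y.1}) u.1.1 v.1.1 :=
  reach_iff (f := fun a : {v : S | v ≠ y} => a.1.1)
    (fun _ _ h => Subtype.ext (Subtype.ext h)) (fun _ _ => Iff.rfl)
    (fun v => ⟨fun h => ⟨⟨⟨v, h.1⟩, fun h' => h.2 (congrArg Subtype.val h')⟩, rfl⟩,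
      fun ⟨a, h⟩ => h ▸ ⟨a.1.2, fun h' => a.2 (Subtype.ext h')⟩⟩) u v

/-- `S` is nonempty, connected, and has no cut vertex. -/
def Bic (G : SimpleGraph V) (S : Set V) : Prop :=
  S.Nonempty ∧ (∀ u ∈ S, ∀ v ∈ S, RT G S u v) ∧
    ∀ y, ∀ u ∈ S, ∀ v ∈ S, u ≠ y → v ≠ y → RT G (S \ {y}) u v

lemma bic_iff {G : SimpleGraph V} {S : Set V} :
    Bic G S ↔ (G.induce S).Connected ∧ ∀ y : ↥S, ¬ IsCutVertex (G.induce S) y := by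
  constructor
  · rintro ⟨⟨s, hs⟩, h1, h2⟩
    refine ⟨(connected_iff _).2 ⟨fun u v => (induce_reach u v).2 (h1 _ u.2 _ v.2), ⟨⟨s, hs⟩⟩⟩, ?_⟩
    rintro y ⟨u, v, hu, hv, -, h⟩
    refine h ((del_reach y ⟨u, hu⟩ ⟨v, hv⟩).2 (h2 _ _ u.2 _ v.2 ?_ ?_))
    · exact fun h => hu (Subtype.ext h)
    · exact fun h => hv (Subtype.ext h)
  · rintro ⟨h1, h2⟩
    obtain ⟨s⟩ := h1.nonempty
    have h3 : ∀ u ∈ S, ∀ v ∈ S, RT G S u v := fun u hu v hv =>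
      (induce_reach ⟨u, hu⟩ ⟨v, hv⟩).1 (h1.preconnected _ _)
    refine ⟨⟨s.1, s.2⟩, h3, ?_⟩
    intro y u hu v hv huy hvy
    by_cases hy : y ∈ S
    · by_contra hcon
      refine h2 ⟨y, hy⟩ ⟨⟨u, hu⟩, ⟨v, hv⟩, fun h => huy (congrArg Subtype.val h),
        fun h => hvy (congrArg Subtype.val h), h1.preconnected _ _, ?_⟩
      rw [del_reach]
      exact hcon
    · rw [Set.sdiff_singleton_eq_self hy]
      exact h3 u hu v hv

lemma exists_block [Finite V] {G : SimpleGraph V} {x z : V} (h : G.Adj x z) :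
    ∃ B : Set V, x ∈ B ∧ z ∈ B ∧ Bic G B ∧ ∀ T : Set V, B ⊆ T → Bic G T → T ⊆ B := by
  have h0 : Bic G {x, z} := by
    have hs : RT G {x, z} x z := RT.step h (by simp) (by simp)
    refine ⟨⟨x, by simp⟩, ?_, ?_⟩
    · rintro u (rfl | rfl) v (rfl | rfl)
      · exact Relation.ReflTransGen.refl
      · exact hs
      · exact hs.symm
      · exact Relation.ReflTransGen.refl
    · rintro y u (rfl | rfl) v (rfl | rfl) hu hv
      · exact Relation.ReflTransGen.refl
      · exact RT.step h (by simp [hu]) (by simp [hv])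
      · exact RT.step h.symm (by simp [hu]) (by simp [hv])
      · exact Relation.ReflTransGen.refl
  obtain ⟨B, hB1, hB2⟩ := (Set.toFinite {T : Set V | Bic G T}).exists_le_maximal h0
  exact ⟨B, hB1 (by simp), hB1 (by simp), hB2.1, fun T hT hTb => hB2.2 hTb hT⟩

/-! ### Chordal blocks -/

lemma walk_shortcut {G : SimpleGraph V} {a b : V} (q : G.Walk a b) {j k : ℕ} (hjk : j + 2 ≤ k)
    (hk : k ≤ q.length) (h : G.Adj (q.getVert j) (q.getVert k)) :
    ∃ q' : G.Walk a b, q'.length < q.length ∧ ∀ v ∈ q'.support, v ∈ q.support := by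
  refine ⟨(q.take j).append (Walk.cons h (q.drop k)), ?_, ?_⟩
  · rw [Walk.length_append, Walk.length_cons, Walk.take_length, Walk.drop_length]
    omega
  · intro v hv
    rw [Walk.mem_support_append_iff, Walk.support_cons, List.mem_cons] at hv
    rcases hv with hv | rfl | hv
    · exact (q.isSubwalk_take j).support_subset hv
    · exact q.getVert_mem_support j
    · exact (q.isSubwalk_drop k).support_subset hv

lemma chordal_nbhd {G : SimpleGraph V} (hG : IsChordal G) (i : V) : ∀ (n : ℕ) (a b : V)
    (p : G.Walk a b), p.length = n → G.Adj i a → G.Adj i b → i ∉ p.support →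
    RT G {v | G.Adj i v} a b := by
  classical
  intro n
  induction n using Nat.strong_induction_on with
  | _ n ih =>
    intro a b p hp hia hib hi
    have hq : p.bypass.IsPath := p.bypass_isPath
    have hql : p.bypass.length ≤ n := hp ▸ p.length_bypass_le_length
    have hqi : i ∉ p.bypass.support := fun h => hi (p.support_bypass_subset_support h)
    generalize p.bypass = q at hq hql hqi
    by_cases hl0 : q.length = 0
    · rw [Walk.eq_of_length_eq_zero hl0]
      exact Relation.ReflTransGen.refl
    by_cases hl1 : q.length = 1
    · exact RT.step (Walk.adj_of_length_eq_one hl1) hia hib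
    have hab : a ≠ b := by
      rintro rfl
      exact hl0 (Walk.length_eq_zero_iff.2 (Walk.isPath_iff_nil.1 hq))
    have hsub : ∀ q' : G.Walk a b, q'.length < q.length → (∀ v ∈ q'.support, v ∈ q.support) →
        RT G {v | G.Adj i v} a b := fun q' h1 h2 =>
      ih q'.length (by omega) a b q' rfl hia hib (fun h => hqi (h2 _ h))
    have hchord : ∀ u v, u ∈ q.support → v ∈ q.support → G.Adj u v → s(u, v) ∉ q.edges →
        RT G {v | G.Adj i v} a b := by
      intro u v hu hv huv he
      obtain ⟨j, rfl, hj⟩ := Walk.mem_support_iff_exists_getVert.1 hu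
      obtain ⟨k, rfl, hk⟩ := Walk.mem_support_iff_exists_getVert.1 hv
      have hne : j ≠ k := by
        rintro rfl
        exact huv.ne rfl
      rw [← Walk.adj_toSubgraph_iff_mem_edges, Walk.toSubgraph_adj_iff] at he
      have h1 : k ≠ j + 1 := by
        rintro rfl
        exact he ⟨j, rfl, by omega⟩
      have h2 : j ≠ k + 1 := by
        rintro rfl
        exact he ⟨k, Sym2.eq_swap, by omega⟩
      rcases (by omega : j + 2 ≤ k ∨ k + 2 ≤ j) with h | h
      · obtain ⟨q', e1, e2⟩ := walk_shortcut q h hk huv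
        exact hsub q' e1 e2
      · obtain ⟨q', e1, e2⟩ := walk_shortcut q h hj huv.symm
        exact hsub q' e1 e2
    have hmid : ∀ v ∈ q.support, G.Adj i v → v ≠ a → v ≠ b → RT G {v | G.Adj i v} a b := by
      intro v hv hiv hva hvb
      have h1 := q.length_takeUntil_lt_length hv hvb
      have h2 := congrArg Walk.length (q.take_spec hv)
      rw [Walk.length_append] at h2
      have h3 : (q.takeUntil v hv).length ≠ 0 := fun h => hva (Walk.eq_of_length_eq_zero h).symm
      exact (ih _ (by omega) _ _ (q.takeUntil v hv) rfl hia hiv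
        (fun h => hqi (q.support_takeUntil_subset_support hv h))).trans
        (ih _ (by omega) _ _ (q.dropUntil v hv) rfl hiv hib
        (fun h => hqi (q.support_dropUntil_subset_support hv h)))
    have hcyc : (Walk.cons hia (q.concat hib.symm)).IsCycle := by
      rw [Walk.cons_isCycle_iff]
      refine ⟨hq.concat hqi _, ?_⟩
      rw [Walk.edges_concat, List.concat_eq_append, List.mem_append, List.mem_singleton]
      rintro (h | h)
      · exact hqi (q.fst_mem_support_of_mem_edges h)
      · rw [Sym2.eq_iff] at h
        rcases h with ⟨h, -⟩ | ⟨-, h⟩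
        · exact hib.ne h
        · exact hab h
    obtain ⟨u, v, hu, hv, huv, he⟩ := hG i _ hcyc (by
      rw [Walk.length_cons, Walk.length_concat]; omega)
    rw [Walk.support_cons, Walk.support_concat, List.mem_cons, List.mem_append,
      List.mem_singleton] at hu hv
    rw [Walk.edges_cons, Walk.edges_concat, List.concat_eq_append, List.mem_cons, List.mem_append,
      List.mem_singleton] at he
    push Not at he
    obtain ⟨e1, e2, e3⟩ := he
    have hu' : u = i ∨ u ∈ q.support := by tauto
    have hv' : v = i ∨ v ∈ q.support := by tauto
    rcases hu' with rfl | hu'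
    · rcases hv' with rfl | hv'
      · exact absurd rfl huv.ne
      · exact hmid v hv' huv (fun h => e1 (by rw [h])) (fun h => e3 (by rw [h, Sym2.eq_swap]))
    · rcases hv' with rfl | hv'
      · exact hmid u hu' huv.symm (fun h => e1 (by rw [h, Sym2.eq_swap])) (fun h => e3 (by rw [h]))
      · exact hchord u v hu' hv' huv e2

lemma chordal_cover {G : SimpleGraph V} (hG : IsChordal G) (hc : G.Connected)
    (hcut : ∀ x, ¬ IsCutVertex G x) {T : Set V} (hT : ∀ u v, G.Adj u v → u ∈ T ∨ v ∈ T)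
    {s t : V} (hs : s ∈ T) (ht : t ∈ T) : RT G T s t := by
  have hN : ∀ i, i ∉ T → ∀ a b, G.Adj i a → G.Adj i b → RT G T a b := by
    intro i hi a b hia hib
    have hr : (delVert G i).Reachable ⟨a, hia.ne'⟩ ⟨b, hib.ne'⟩ := by
      by_contra hcon
      exact hcut i ⟨a, b, _, _, hc.preconnected a b, hcon⟩
    obtain ⟨p⟩ := hr
    have hsup : i ∉ (p.map (Embedding.induce _).toHom).support := by
      rw [Walk.support_map, List.mem_map]
      rintro ⟨y, -, hy⟩
      exact y.2 hy
    have := chordal_nbhd hG i _ a b (p.map (Embedding.induce _).toHom) rfl hia hib hsup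
    exact this.mono (fun v hv => (hT i v hv).resolve_left hi)
  have hr := (reachable_iff_reflTransGen s t).1 (hc.preconnected s t)
  have key : (t ∈ T → RT G T s t) ∧ (t ∉ T → ∀ a, G.Adj t a → RT G T s a) := by
    clear ht
    induction hr with
    | refl => exact ⟨fun _ => Relation.ReflTransGen.refl, fun h => absurd hs h⟩
    | @tail v v' _ hadj ih =>
      refine ⟨fun hv' => ?_, fun hv' a ha => ?_⟩
      · by_cases hv : v ∈ T
        · exact (ih.1 hv).trans (RT.step hadj hv hv')
        · exact ih.2 hv v' hadj
      · have hv := (hT v v' hadj).resolve_right hv'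
        exact (ih.1 hv).trans (hN v' hv' v a hadj.symm ha)
  exact key.1 ht

lemma RT.ofInduce {G : SimpleGraph V} {S : Set V} {T : Set S} {T' : Set V}
    (hT : ∀ a ∈ T, a.1 ∈ T') {u v : S} (h : RT (G.induce S) T u v) : RT G T' u.1 v.1 := by
  induction h with
  | refl => exact Relation.ReflTransGen.refl
  | tail _ hbc ih => exact ih.trans (RT.step hbc.1 (hT _ hbc.2.1) (hT _ hbc.2.2))

/-- All blocks of the permitted kinds satisfy the block goal. -/
theorem block_goal {G : SimpleGraph V} {B : Finset V} {X : Set V} {x : V}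
    (hbic : Bic G (B : Set V)) (h2 : ∃ z ∈ B, z ≠ x)
    (hXB : ∀ y ∈ X, y ∈ B) (hx : x ∈ X)
    (hty : IsCycleSet G (B : Set V) ∨ (∃ u w : V, G.Adj u w ∧ (B : Set V) = {u, w}) ∨
      (IsChordal (G.induce (B : Set V)) ∧ IsBiconnected (G.induce (B : Set V)))) :
    BlockGoal G B X x := by
  have hnb : ∀ v ∈ B, ∃ s ∈ B, G.Adj v s := by
    intro v hv
    obtain ⟨t, ht, htv⟩ : ∃ t ∈ B, t ≠ v := by
      by_cases hvx : v = x
      · subst hvx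
        exact h2
      · exact ⟨x, hXB x hx, Ne.symm hvx⟩
    have := hbic.2.1 v hv t ht
    rcases Relation.ReflTransGen.cases_head this with h | ⟨c, hc, -⟩
    · exact absurd h.symm htv
    · exact ⟨c, hc.2.2, hc.1⟩
  rcases hty with hcyc | ⟨u, w, huw, hB⟩ | ⟨hch, hcon, -, hcut⟩
  · by_cases hne : ∃ v ∈ B, v ∉ X
    · obtain ⟨n, w, hn, w0, wn, hadj, inj, hmem, hedge⟩ := cycle_seq hcyc (hXB x hx)
      exact ring_block hn w0 wn hadj inj (fun v => hmem v) (fun u hu v hv => hedge u hu v hv)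
        hXB hx hne
    · push Not at hne
      refine conn_block hXB hx hnb ?_
      intro T hT hXT _ u hu v hv
      have : T = B := Finset.Subset.antisymm hT (fun y hy => hXT y (hne y hy))
      subst this
      exact hbic.2.1 u hu v hv
  · refine conn_block hXB hx hnb ?_
    intro T hT _ _ a ha b hb
    have ha' : a ∈ (B : Set V) := hT ha
    have hb' : b ∈ (B : Set V) := hT hb
    rw [hB] at ha' hb'
    rcases ha' with rfl | rfl <;> rcases hb' with rfl | rfl
    · exact Relation.ReflTransGen.refl
    · exact RT.step huw ha hb
    · exact RT.step huw.symm ha hb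
    · exact Relation.ReflTransGen.refl
  · refine conn_block hXB hx hnb ?_
    intro T hT _ hcov a ha b hb
    have := chordal_cover hch hcon hcut (T := {v | v.1 ∈ T})
      (fun u v huv => hcov u.1 u.2 v.1 v.2 huv) (s := ⟨a, hT ha⟩) (t := ⟨b, hT hb⟩) ha hb
    exact RT.ofInduce (fun a ha => ha) this

/-! ### Separation by blocks -/

/-- The graph `G` without the edges inside `B`. -/
def cutOut (G : SimpleGraph V) (B : Set V) : SimpleGraph V where
  Adj u v := G.Adj u v ∧ ¬ (u ∈ B ∧ v ∈ B)
  symm := ⟨fun _ _ h => ⟨h.1.symm, fun h' => h.2 ⟨h'.2, h'.1⟩⟩⟩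
  loopless := ⟨fun _ h => h.1.ne rfl⟩

lemma rt_getVert {G H : SimpleGraph V} (hGH : ∀ u v, H.Adj u v → G.Adj u v) {a b : V}
    (p : H.Walk a b) {T : Set V} {i k : ℕ} (hik : i ≤ k) (hk : k ≤ p.length)
    (hT : ∀ j, i ≤ j → j ≤ k → p.getVert j ∈ T) : RT G T (p.getVert i) (p.getVert k) := by
  induction k, hik using Nat.le_induction with
  | base => exact Relation.ReflTransGen.refl
  | succ k hik ih =>
    exact (ih (by omega) (fun j h1 h2 => hT j h1 (by omega))).trans
      (RT.step (hGH _ _ (p.adj_getVert_succ (by omega))) (hT k hik (by omega))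
        (hT _ (by omega) le_rfl))

theorem block_sep {G : SimpleGraph V} {B : Set V} (hB : Bic G B)
    (hmax : ∀ T : Set V, B ⊆ T → Bic G T → T ⊆ B) {b b' : V} (hb : b ∈ B) (hb' : b' ∈ B)
    (h : (cutOut G B).Reachable b b') : b = b' := by
  obtain ⟨p, hp⟩ := h.exists_isPath
  have hle : ∀ u v, (cutOut G B).Adj u v → G.Adj u v := fun u v h => h.1
  let T : Set V := B ∪ {v | v ∈ p.support}
  have hBT : B ⊆ T := Set.subset_union_left
  have hpT : ∀ j, p.getVert j ∈ T := fun j => Or.inr (p.getVert_mem_support j)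
  have hend : ∀ v ∈ T, ∀ y, v ≠ y → ∃ e ∈ B, e ≠ y ∧ RT G (T \ {y}) v e := by
    rintro v (hv | hv) y hvy
    · exact ⟨v, hv, hvy, Relation.ReflTransGen.refl⟩
    · obtain ⟨i, rfl, hi⟩ := Walk.mem_support_iff_exists_getVert.1 hv
      by_cases hy : ∃ j, j ≤ i ∧ p.getVert j = y
      · obtain ⟨j, hj, rfl⟩ := hy
        have hne : j ≠ i := by
          rintro rfl
          exact hvy rfl
        have hk : ∀ k, i ≤ k → k ≤ p.length → p.getVert k ≠ p.getVert j := by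
          intro k h1 h2 h3
          have := hp.getVert_injOn (by simp only [Set.mem_ofPred_eq]; omega)
            (by simp only [Set.mem_ofPred_eq]; omega) h3
          omega
        refine ⟨b', hb', ?_, ?_⟩
        · have := hk p.length hi le_rfl
          rwa [p.getVert_length] at this
        · have := rt_getVert hle p (T := T \ {p.getVert j}) hi le_rfl
            (fun k h1 h2 => ⟨hpT k, hk k h1 h2⟩)
          rwa [p.getVert_length] at this
      · push Not at hy
        refine ⟨b, hb, ?_, ?_⟩
        · have := hy 0 (Nat.zero_le _)
          rwa [p.getVert_zero] at this
        · have := rt_getVert hle p (T := T \ {y}) (Nat.zero_le i) hi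
            (fun k h1 h2 => ⟨hpT k, hy k h2⟩)
          rw [p.getVert_zero] at this
          exact this.symm
  have hT : Bic G T := by
    refine ⟨hB.1.mono hBT, ?_, ?_⟩
    · intro u hu v hv
      by_cases huv : u = v
      · rw [huv]
        exact Relation.ReflTransGen.refl
      · obtain ⟨e, he, -, h1⟩ := hend u hu v huv
        obtain ⟨e', he', -, h2⟩ := hend v hv u (Ne.symm huv)
        exact (h1.mono Set.sdiff_subset).trans
          (((hB.2.1 e he e' he').mono hBT).trans (h2.mono Set.sdiff_subset).symm)
    · intro y u hu v hv huy hvy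
      obtain ⟨e, he, hey, h1⟩ := hend u hu y huy
      obtain ⟨e', he', hey', h2⟩ := hend v hv y hvy
      exact h1.trans (((hB.2.2 y e he e' he' hey hey').mono
        (Set.sdiff_subset_sdiff_left hBT)).trans h2.symm)
  have hTB := hmax T hBT hT
  by_contra hne
  have hl : 0 < p.length := by
    rcases Nat.eq_zero_or_pos p.length with h | h
    · exact absurd (Walk.eq_of_length_eq_zero h) hne
    · exact h
  have := p.adj_getVert_succ hl
  exact this.2 ⟨hTB (hpT _), hTB (hpT _)⟩

lemma cutOut_cover {G : SimpleGraph V} (hG : G.Connected) {B : Set V} {x : V} (hx : x ∈ B)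
    (v : V) : ∃ b ∈ B, (cutOut G B).Reachable b v := by
  have h := (reachable_iff_reflTransGen x v).1 (hG.preconnected x v)
  induction h with
  | refl => exact ⟨x, hx, Reachable.refl _⟩
  | @tail c d _ hcd ih =>
    obtain ⟨b, hb, hr⟩ := ih
    by_cases hd : d ∈ B
    · exact ⟨d, hd, Reachable.refl _⟩
    · have : (cutOut G B).Adj c d := ⟨hcd, fun h => hd h.2⟩
      exact ⟨b, hb, hr.trans this.reachable⟩

/-- `S` is a branch of `G` at `x` (away from `x0`). -/
def Branch (G : SimpleGraph V) (x0 : V) (S : Finset V) (x : V) : Prop :=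
  x ∈ S ∧ (∀ u ∈ S, u ≠ x → ∀ w, G.Adj u w → w ∈ S) ∧ (x0 ∈ S → x0 = x)

lemma Branch.nbr {G : SimpleGraph V} (hG : G.Connected) {x0 x : V} {S : Finset V}
    (h : Branch G x0 S x) {v : V} (hv : v ∈ S) (hvx : v ≠ x) :
    ∃ z ∈ S, z ≠ x ∧ G.Adj z x := by
  by_contra hcon
  push Not at hcon
  have hr := (reachable_iff_reflTransGen v x0).1 (hG.preconnected v x0)
  have : x0 ∈ S ∧ x0 ≠ x := by
    have key : ∀ t, Relation.ReflTransGen G.Adj v t → t ∈ S ∧ t ≠ x := by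
      intro t ht
      induction ht with
      | refl => exact ⟨hv, hvx⟩
      | @tail c d _ hcd ih =>
        refine ⟨h.2.1 c ih.1 ih.2 d hcd, ?_⟩
        rintro rfl
        exact hcon c ih.1 ih.2 hcd
    exact key _ hr
  exact this.2 (h.2.2 this.1)

/-- A family of guard counts arising from a defense of an extension at `x0`. -/
structure Fam (G : SimpleGraph V) (x0 : V) (F : Set (V → ℕ)) : Prop where
  ne : F.Nonempty
  cov : ∀ f ∈ F, ∀ u v, G.Adj u v → 1 ≤ f u ∨ 1 ≤ f v
  out : ∀ f ∈ F, ∀ Y : Finset V, x0 ∉ Y → ∀ z ∈ Y, ∀ w, w ∉ Y → G.Adj z w →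
    (∀ y ∈ Y, ∀ u, G.Adj y u → u ∈ Y ∨ f u = 0) → ∃ f' ∈ F, ∑ y ∈ Y, f' y < ∑ y ∈ Y, f y

theorem main_ind [Finite V] {G : SimpleGraph V} (hG : G.Connected)
    (hblocks : ∀ S : Set V, IsBlock G S →
      IsCycleSet G S ∨ (∃ u w : V, G.Adj u w ∧ S = {u, w}) ∨
      (IsChordal (G.induce S) ∧ IsBiconnected (G.induce S)))
    {x0 : V} {F : Set (V → ℕ)} (hF : Fam G x0 F) : ∀ (n : ℕ) (S : Finset V) (x : V),
    S.card = n → Branch G x0 S x → ∃ (a : ℕ) (Lo Hi : Set (Multiset V)), Strat G S x a Lo Hi ∧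
      ∀ f ∈ F, ∀ S' : Finset V, (∀ v, v ∈ S' ↔ v ∈ S ∧ v ≠ x) → a ≤ ∑ v ∈ S', f v := by
  classical
  intro n
  induction n using Nat.strong_induction_on with
  | _ n ih =>
  intro S x hSn hbr
  by_cases htriv : ∀ v ∈ S, v = x
  · have : S = {x} := by
      ext v
      rw [Finset.mem_singleton]
      exact ⟨htriv v, fun h => h ▸ hbr.1⟩
    subst this
    exact ⟨0, _, _, strat_single G x, fun _ _ _ _ => Nat.zero_le _⟩
  push Not at htriv
  obtain ⟨v0, hv0, hv0x⟩ := htriv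
  obtain ⟨z, hz, hzx, hzadj⟩ := hbr.nbr hG hv0 hv0x
  obtain ⟨B0, hxB0, hzB0, hbic0, hmax⟩ := exists_block hzadj.symm
  have hsep : ∀ {b b' : V}, b ∈ B0 → b' ∈ B0 → (cutOut G B0).Reachable b b' → b = b' :=
    fun hb hb' h => block_sep hbic0 hmax hb hb' h
  have hty := hblocks B0 ⟨(bic_iff.1 hbic0).1, (bic_iff.1 hbic0).2,
    fun T hT h1 h2 => hmax T hT (bic_iff.2 ⟨h1, h2⟩)⟩
  obtain ⟨B, hBB⟩ : ∃ B : Finset V, (B : Set V) = B0 :=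
    ⟨(Set.toFinite B0).toFinset, by simp⟩
  subst hBB
  have hxB : x ∈ B := hxB0
  have hzB : z ∈ B := hzB0
  have hBS : ∀ b ∈ B, b ∈ S := by
    intro b hb
    by_cases hbx : b = x
    · exact hbx ▸ hbr.1
    · have := hbic0.2.2 x z hzB b hb hzx hbx
      have key : b ∈ S ∧ b ≠ x := by
        clear hbx hb
        induction this with
        | refl => exact ⟨hz, hzx⟩
        | @tail c d _ hcd ih => exact ⟨hbr.2.1 c ih.1 ih.2 d hcd.1, hcd.2.2.2⟩
      exact key.1
  let Sf : V → Finset V := fun b => S.filter (fun v => (cutOut G (B : Set V)).Reachable b v)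
  have hSf : ∀ b v, v ∈ Sf b ↔ v ∈ S ∧ (cutOut G (B : Set V)).Reachable b v := fun b v => by
    simp only [Sf, Finset.mem_filter]
  have hself : ∀ b ∈ B, b ∈ Sf b := fun b hb => (hSf b b).2 ⟨hBS b hb, Reachable.refl _⟩
  have hSfB : ∀ b ∈ B, ∀ c ∈ B, c ∈ Sf b → c = b := fun b hb c hc h =>
    (hsep hb hc ((hSf b c).1 h).2).symm
  have hstepout : ∀ b ∈ B, ∀ u ∈ Sf b, ∀ w, G.Adj u w → w ∈ S → ¬ (u ∈ B ∧ w ∈ B) →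
      w ∈ Sf b := by
    intro b hb u hu w huw hw hn
    rw [hSf] at hu ⊢
    have : (cutOut G (B : Set V)).Adj u w := ⟨huw, hn⟩
    exact ⟨hw, hu.2.trans this.reachable⟩
  have hbrf : ∀ b ∈ B, Branch G x0 (Sf b) b := by
    intro b hb
    refine ⟨hself b hb, ?_, ?_⟩
    · intro u hu hub w huw
      have huB : u ∉ B := fun h => hub (hSfB b hb u h hu)
      refine hstepout b hb u hu w huw ?_ (fun h => huB h.1)
      exact hbr.2.1 u ((hSf b u).1 hu).1 (fun h => huB (h ▸ hxB)) w huw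
    · intro h
      have hxx := hbr.2.2 ((hSf b x0).1 h).1
      subst hxx
      exact hSfB b hb x0 hxB h
  have hcard : ∀ b ∈ B, (Sf b).card < n := by
    intro b hb
    rw [← hSn]
    refine Finset.card_lt_card ⟨Finset.filter_subset _ _, fun hsub => ?_⟩
    have h1 := hSfB b hb x hxB (hsub (hBS x hxB))
    have h2 := hSfB b hb z hzB (hsub (hBS z hzB))
    exact hzx (h2.trans h1.symm)
  have ih' : ∀ b, ∃ (a : ℕ) (Lo Hi : Set (Multiset V)), b ∈ B → Strat G (Sf b) b a Lo Hi ∧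
      ∀ f ∈ F, a ≤ ∑ v ∈ (Sf b).erase b, f v := by
    intro b
    by_cases hb : b ∈ B
    · obtain ⟨a, Lo, Hi, h1, h2⟩ := ih _ (hcard b hb) (Sf b) b rfl (hbrf b hb)
      exact ⟨a, Lo, Hi, fun _ => ⟨h1, fun f hf => h2 f hf _ (fun v => by
        rw [Finset.mem_erase]; tauto)⟩⟩
    · exact ⟨0, ∅, ∅, fun h => absurd h hb⟩
  choose a Lo Hi hst using ih'
  let X : Set V := {b | b ∈ B ∧ (b = x ∨ ∃ v ∈ Sf b, v ≠ b)}
  have hxX : x ∈ X := ⟨hxB, Or.inl rfl⟩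
  have hXB : ∀ y ∈ X, y ∈ B := fun y hy => hy.1
  -- trivial fibers
  have htrivf : ∀ b ∈ B, b ∉ X → Sf b = {b} ∧ a b = 0 := by
    intro b hb hbX
    have h1 : Sf b = {b} := by
      ext v
      rw [Finset.mem_singleton]
      constructor
      · intro hv
        by_contra hvb
        exact hbX ⟨hb, Or.inr ⟨v, hv, hvb⟩⟩
      · rintro rfl
        exact hself v hb
    refine ⟨h1, ?_⟩
    obtain ⟨f, hf⟩ := hF.ne
    have := (hst b hb).2 f hf
    rw [h1] at this
    simpa using this
  have hedge : ∀ u ∈ S, ∀ v ∈ S, G.Adj u v →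
      (u ∈ B ∧ v ∈ B) ∨ ∃ y ∈ X, u ∈ Sf y ∧ v ∈ Sf y := by
    intro u hu v hv huv
    by_cases hB2 : u ∈ B ∧ v ∈ B
    · exact Or.inl hB2
    right
    obtain ⟨b, hb, hbu⟩ := cutOut_cover hG hxB0 u
    have hu' : u ∈ Sf b := (hSf b u).2 ⟨hu, hbu⟩
    have hv' : v ∈ Sf b := hstepout b hb u hu' v huv hv hB2
    refine ⟨b, ⟨hb, Or.inr ?_⟩, hu', hv'⟩
    by_cases hub : u = b
    · exact ⟨v, hv', fun h => huv.ne (hub.trans h.symm)⟩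
    · exact ⟨u, hu', hub⟩
  obtain ⟨N, T, hcore, hnum⟩ := block_goal hbic0 ⟨z, hzB, hzx⟩ hXB hxX hty
  refine ⟨_, _, _, glue (fun y hy => (hst y hy).1) hxX hXB hcore hedge, ?_⟩
  -- lower bound
  have hlow : ∀ f ∈ F, ∀ b ∈ B, a b ≤ ∑ v ∈ Sf b, f v := by
    intro f hf b hb
    exact ((hst b hb).2 f hf).trans
      (Finset.sum_le_sum_of_subset (Finset.erase_subset _ _))
  have hx0 : ∀ b ∈ B, b ≠ x → x0 ∉ Sf b := by
    intro b hb hbx h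
    have hxx := hbr.2.2 ((hSf b x0).1 h).1
    rw [hxx] at h
    exact hbx (hSfB b hb x hxB h).symm
  have hlow1 : ∀ f ∈ F, ∀ b ∈ X, b ≠ x → a b + 1 ≤ ∑ v ∈ Sf b, f v := by
    intro f hf b hbX hbx
    have hb := hXB b hbX
    have hsum := Finset.add_sum_erase (Sf b) f (hself b hb)
    have hl := (hst b hb).2 f hf
    by_cases hfb : f b = 0
    · obtain ⟨v, hv, hvb⟩ := hbX.2.resolve_left hbx
      obtain ⟨z', hz', hz'b, hz'adj⟩ := (hbrf b hb).nbr hG hv hvb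
      obtain ⟨f', hf', hlt⟩ := hF.out f hf ((Sf b).erase b)
        (fun h => hx0 b hb hbx (Finset.mem_of_mem_erase h)) z'
        (Finset.mem_erase.2 ⟨hz'b, hz'⟩) b (Finset.notMem_erase _ _) hz'adj (by
          intro y hy u hyu
          rw [Finset.mem_erase] at hy
          have := (hbrf b hb).2.1 y hy.2 hy.1 u hyu
          by_cases hub : u = b
          · exact Or.inr (hub ▸ hfb)
          · exact Or.inl (Finset.mem_erase.2 ⟨hub, this⟩))
      have := (hst b hb).2 f' hf'
      omega
    · omega
  have hdisj : ∀ b ∈ B, ∀ b' ∈ B, b ≠ b' → Disjoint (Sf b) (Sf b') := by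
    intro b hb b' hb' hne
    rw [Finset.disjoint_left]
    intro v hv hv'
    exact hne (hsep hb hb' (((hSf b v).1 hv).2.trans ((hSf b' v).1 hv').2.symm))
  intro f hf S' hS'
  have hkey := hnum (fun b => ∑ v ∈ Sf b, f v - a b) ?_ ?_ ?_ (B.erase x)
    (fun y => by rw [Finset.mem_erase]; tauto)
  · let g : V → Finset V := fun b => (Sf b).erase x
    have hgsub : B.biUnion g ⊆ S' := by
      intro v hv
      rw [Finset.mem_biUnion] at hv
      obtain ⟨b, hb, hv⟩ := hv
      have hv := Finset.mem_erase.1 hv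
      exact (hS' v).2 ⟨((hSf b v).1 hv.2).1, hv.1⟩
    have hgsum : ∑ v ∈ B.biUnion g, f v = ∑ b ∈ B, ∑ v ∈ g b, f v := by
      refine Finset.sum_biUnion ?_
      intro b hb b' hb' hne
      exact Finset.disjoint_of_subset_left (Finset.erase_subset _ _)
        (Finset.disjoint_of_subset_right (Finset.erase_subset _ _) (hdisj b hb b' hb' hne))
    have h1 := Finset.sum_le_sum_of_subset (f := f) hgsub
    have h2 := Finset.add_sum_erase B (fun b => ∑ v ∈ g b, f v) hxB
    have h3 := Finset.add_sum_erase B a hxB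
    have h4 := (hst x hxB).2 f hf
    have h5 : ∑ b ∈ B.erase x, (∑ v ∈ Sf b, f v - a b) + ∑ b ∈ B.erase x, a b =
        ∑ b ∈ B.erase x, ∑ v ∈ g b, f v := by
      rw [← Finset.sum_add_distrib]
      refine Finset.sum_congr rfl ?_
      intro b hb
      rw [Finset.mem_erase] at hb
      have := hlow f hf b hb.2
      have hg : g b = Sf b := Finset.erase_eq_of_notMem
        (fun h => hb.1 (hSfB b hb.2 x hxB h).symm)
      rw [hg]
      omega
    simp only [g] at h1 h2 h5 hgsum
    omega
  · intro y hy hyx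
    have := hlow1 f hf y hy hyx
    omega
  · intro u hu v hv huv hux hvx
    by_cases huX : u ∈ X
    · have := hlow1 f hf u huX hux
      exact Or.inl (by omega)
    by_cases hvX : v ∈ X
    · have := hlow1 f hf v hvX hvx
      exact Or.inr (by omega)
    obtain ⟨e1, e2⟩ := htrivf u hu huX
    obtain ⟨e3, e4⟩ := htrivf v hv hvX
    simp only [e1, e2, e3, e4, Finset.sum_singleton]
    exact hF.cov f hf u v huv
  · intro Y hY z hzY w hwB hwY hzw hcl
    by_contra hcon
    push Not at hcon
    have hYB : ∀ y ∈ Y, y ∈ B := fun y hy => hXB y (hY y hy).1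
    have hpd : Set.PairwiseDisjoint (Y : Set V) Sf := fun b hb b' hb' hne =>
      hdisj b (hYB b hb) b' (hYB b' hb') hne
    have hout := hF.out f hf (Y.biUnion Sf) ?_ z ?_ w ?_ hzw ?_
    · obtain ⟨f', hf', hlt⟩ := hout
      rw [Finset.sum_biUnion hpd, Finset.sum_biUnion hpd] at hlt
      refine absurd hlt (not_lt.2 (Finset.sum_le_sum ?_))
      intro y hy
      have h1 := hcon y hy
      have h2 := hlow1 f' hf' y (hY y hy).1 (hY y hy).2
      omega
    · rw [Finset.mem_biUnion]
      rintro ⟨y, hy, h⟩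
      exact hx0 y (hYB y hy) (hY y hy).2 h
    · exact Finset.mem_biUnion.2 ⟨z, hzY, hself z (hYB z hzY)⟩
    · rw [Finset.mem_biUnion]
      rintro ⟨y, hy, h⟩
      exact hwY (hSfB y (hYB y hy) w hwB h ▸ hy)
    · intro v hv u hvu
      rw [Finset.mem_biUnion] at hv
      obtain ⟨y, hy, hv⟩ := hv
      have hyB := hYB y hy
      by_cases hvy : v = y
      · subst hvy
        by_cases huB : u ∈ B
        · rcases hcl v hy u huB hvu with h | ⟨h1, h2, h3⟩
          · exact Or.inl (Finset.mem_biUnion.2 ⟨u, h, hself u huB⟩)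
          · obtain ⟨e1, e2⟩ := htrivf u huB h2
            simp only [e1, e2, Finset.sum_singleton] at h3
            exact Or.inr h3
        · refine Or.inl (Finset.mem_biUnion.2 ⟨v, hy, ?_⟩)
          exact hstepout v hyB v hv u hvu
            (hbr.2.1 v (hBS v hyB) (hY v hy).2 u hvu) (fun h => huB h.2)
      · exact Or.inl (Finset.mem_biUnion.2 ⟨y, hy, (hbrf y hyB).2.1 v hv hvy u hvu⟩)

/-! ### From strategies to upper bounds -/

theorem evcOn_le {G : SimpleGraph V} {S : Finset V} (hS : ∀ v, v ∈ S) {x : V} {a : ℕ}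
    {Lo Hi : Set (Multiset V)} (h : Strat G S x a Lo Hi) : evcOn G {x} ≤ a + 2 := by
  refine Nat.sInf_le ⟨{C | ∃ R ∈ Hi, C = x ::ₘ R}, ⟨?_, ?_, ?_⟩, ?_⟩
  · obtain ⟨R, hR⟩ := h.ne
    obtain ⟨R', hR', -⟩ := h.lh R hR
    exact ⟨_, R', hR', rfl⟩
  · rintro C ⟨R, hR, rfl⟩
    refine ⟨by rw [Multiset.card_cons, h.hiC R hR], ?_⟩
    intro u v huv
    exact h.hiCov R hR u (hS u) v (hS v) huv
  · rintro C ⟨R, hR, rfl⟩ u v huv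
    obtain ⟨R', hR', M, hM, hit⟩ := h.hh R hR u (hS u) v (hS v) huv
    exact ⟨_, ⟨R', hR', rfl⟩, M, hM, hit⟩
  · rintro C ⟨R, hR, rfl⟩ s hs
    rw [Set.mem_singleton_iff] at hs
    subst hs
    exact Multiset.mem_cons_self _ _

lemma pendant_some {G : SimpleGraph V} {x u v : V} (h : G.Adj u v) :
    (addPendant G x).Adj (some u) (some v) := by
  rw [addPendant, SimpleGraph.fromRel_adj]
  exact ⟨fun h' => h.ne (Option.some.inj h'), Or.inl (Or.inl ⟨u, v, rfl, rfl, h⟩)⟩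

lemma pendant_none {G : SimpleGraph V} {x : V} : (addPendant G x).Adj none (some x) := by
  rw [addPendant, SimpleGraph.fromRel_adj]
  exact ⟨by simp, Or.inl (Or.inr ⟨rfl, rfl⟩)⟩

lemma pendant_cases {G : SimpleGraph V} {x : V} {u v : Option V} (h : (addPendant G x).Adj u v) :
    (∃ u' v', u = some u' ∧ v = some v' ∧ G.Adj u' v') ∨ (u = none ∧ v = some x) ∨
      (u = some x ∧ v = none) := by
  rw [addPendant, SimpleGraph.fromRel_adj] at h
  rcases h.2 with (h | h) | (⟨u', v', h1, h2, h3⟩ | h)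
  · exact Or.inl h
  · exact Or.inr (Or.inl h)
  · exact Or.inl ⟨v', u', h2, h1, h3.symm⟩
  · exact Or.inr (Or.inr ⟨h.2, h.1⟩)

lemma validMove_some {G : SimpleGraph V} {x : V} {C C' : Multiset V} {M : Multiset (V × V)}
    (h : ValidMove G C C' M) : ValidMove (addPendant G x) (C.map some) (C'.map some)
      (M.map (Prod.map some some)) := by
  refine ⟨?_, ?_, ?_⟩
  · rw [← h.1, Multiset.map_map, Multiset.map_map]
    rfl
  · rw [← h.2.1, Multiset.map_map, Multiset.map_map]
    rfl
  · intro p hp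
    obtain ⟨q, hq, rfl⟩ := Multiset.mem_map.1 hp
    rcases h.2.2 q hq with h | h
    · exact Or.inl (congrArg some h)
    · exact Or.inr (pendant_some h)

lemma validMove_cons {G : SimpleGraph V} {C C' : Multiset V} {M : Multiset (V × V)}
    (h : ValidMove G C C' M) {u v : V} (huv : u = v ∨ G.Adj u v) :
    ValidMove G (u ::ₘ C) (v ::ₘ C') ((u, v) ::ₘ M) := by
  refine ⟨by rw [Multiset.map_cons, h.1], by rw [Multiset.map_cons, h.2.1], ?_⟩
  intro p hp
  rcases Multiset.mem_cons.1 hp with rfl | hp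
  · exact huv
  · exact h.2.2 p hp

lemma hit_some {M : Multiset (V × V)} {u v : V} (h : Hit M u v) :
    Hit (M.map (Prod.map some some)) (some u) (some v) := by
  rcases h with h | h
  · exact Or.inl (Multiset.mem_map.2 ⟨_, h, rfl⟩)
  · exact Or.inr (Multiset.mem_map.2 ⟨_, h, rfl⟩)

lemma hit_cons {M : Multiset (V × V)} {u v : V} (h : Hit M u v) (q : V × V) :
    Hit (q ::ₘ M) u v :=
  Or.imp (Multiset.mem_cons_of_mem) (Multiset.mem_cons_of_mem) h

theorem evc_pendant_le {G : SimpleGraph V} {S : Finset V} (hS : ∀ v, v ∈ S) {x : V} {a : ℕ}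
    {Lo Hi : Set (Multiset V)} (h : Strat G S x a Lo Hi) :
    evc (addPendant G x) ≤ a + 2 := by
  refine Nat.sInf_le ⟨{C | (∃ R ∈ Hi, C = (x ::ₘ R).map some) ∨
    (∃ R ∈ Lo, C = none ::ₘ (x ::ₘ R).map some)}, ⟨?_, ?_, ?_⟩⟩
  · obtain ⟨R, hR⟩ := h.ne
    exact ⟨_, Or.inr ⟨R, hR, rfl⟩⟩
  · rintro C (⟨R, hR, rfl⟩ | ⟨R, hR, rfl⟩)
    · refine ⟨by rw [Multiset.card_map, Multiset.card_cons, h.hiC R hR], ?_⟩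
      intro u v huv0
      rcases pendant_cases huv0 with ⟨u, v, rfl, rfl, huv⟩ | ⟨rfl, rfl⟩ | ⟨rfl, rfl⟩
      · exact (h.hiCov R hR u (hS u) v (hS v) huv).imp (Multiset.mem_map_of_mem some)
          (Multiset.mem_map_of_mem some)
      · exact Or.inr (Multiset.mem_map_of_mem some (Multiset.mem_cons_self _ _))
      · exact Or.inl (Multiset.mem_map_of_mem some (Multiset.mem_cons_self _ _))
    · refine ⟨by rw [Multiset.card_cons, Multiset.card_map, Multiset.card_cons, h.loC R hR], ?_⟩
      intro u v huv0
      rcases pendant_cases huv0 with ⟨u, v, rfl, rfl, huv⟩ | ⟨rfl, rfl⟩ | ⟨rfl, rfl⟩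
      · exact (h.loCov R hR u (hS u) v (hS v) huv).imp
          (fun h => Multiset.mem_cons_of_mem (Multiset.mem_map_of_mem some h))
          (fun h => Multiset.mem_cons_of_mem (Multiset.mem_map_of_mem some h))
      · exact Or.inl (Multiset.mem_cons_self _ _)
      · exact Or.inr (Multiset.mem_cons_self _ _)
  · intro C hC u v huv
    have key : ∀ u v : Option V, ((∃ u' v', u = some u' ∧ v = some v' ∧ G.Adj u' v') ∨
        (u = none ∧ v = some x)) → ∃ C' ∈ {C | (∃ R ∈ Hi, C = (x ::ₘ R).map some) ∨
          (∃ R ∈ Lo, C = none ::ₘ (x ::ₘ R).map some)},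
          ∃ M, ValidMove (addPendant G x) C C' M ∧ Hit M u v := by
      rcases hC with ⟨R, hR, rfl⟩ | ⟨R, hR, rfl⟩
      · rintro u v (⟨u, v, rfl, rfl, huv⟩ | ⟨rfl, rfl⟩)
        · obtain ⟨R', hR', M, hM, hit⟩ := h.hh R hR u (hS u) v (hS v) huv
          exact ⟨_, Or.inl ⟨R', hR', rfl⟩, _, validMove_some hM, hit_some hit⟩
        · obtain ⟨R', hR', M, hM⟩ := h.hl R hR
          refine ⟨_, Or.inr ⟨R', hR', rfl⟩, (some x, none) ::ₘ M.map (Prod.map some some), ?_, ?_⟩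
          · rw [Multiset.map_cons]
            exact validMove_cons (validMove_some hM) (Or.inr pendant_none.symm)
          · exact Or.inr (Multiset.mem_cons_self _ _)
      · rintro u v (⟨u, v, rfl, rfl, huv⟩ | ⟨rfl, rfl⟩)
        · rcases h.la R hR u (hS u) v (hS v) huv with
            ⟨R', hR', M, hM, hit⟩ | ⟨R', hR', M, hM, hit⟩
          · exact ⟨_, Or.inr ⟨R', hR', rfl⟩, _,
              validMove_cons (validMove_some hM) (Or.inl rfl), hit_cons (hit_some hit) _⟩
          · refine ⟨_, Or.inl ⟨R', hR', rfl⟩, (none, some x) ::ₘ M.map (Prod.map some some),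
              ?_, hit_cons (hit_some hit) _⟩
            rw [Multiset.map_cons some x R']
            exact validMove_cons (validMove_some hM) (Or.inr pendant_none)
        · refine ⟨_, Or.inr ⟨R, hR, rfl⟩,
            (none, some x) ::ₘ (some x, none) ::ₘ diag (R.map some), ?_, ?_⟩
          · have := validMove_cons (validMove_cons (validMove_diag (addPendant G x) (R.map some))
              (Or.inr (pendant_none (x := x)).symm)) (Or.inr (pendant_none (x := x)))
            rw [Multiset.map_cons]
            rwa [Multiset.cons_swap (some x) none] at this
          · exact Or.inl (Multiset.mem_cons_self _ _)
    rcases pendant_cases huv with h1 | h1 | h1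
    · exact key u v (Or.inl h1)
    · exact key u v (Or.inr h1)
    · obtain ⟨C', hC', M, hM, hit⟩ := key v u (Or.inr ⟨h1.2, h1.1⟩)
      exact ⟨C', hC', M, hM, hit.symm⟩

/-! ### The family of guard counts of an extension -/

open Classical in
lemma sum_count {W : Type} {ι : V → W} (hι : Function.Injective ι) (Y : Finset V)
    (C : Multiset W) :
    ∑ y ∈ Y, C.count (ι y) = C.countP (fun v => ∃ y ∈ Y, ι y = v) := by
  induction C using Multiset.induction with
  | empty => simp
  | cons c C ih =>
    rw [Multiset.countP_cons, ← ih]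
    simp only [Multiset.count_cons]
    rw [Finset.sum_add_distrib]
    congr 1
    by_cases h : ∃ y ∈ Y, ι y = c
    · rw [if_pos h]
      obtain ⟨y, hy, rfl⟩ := h
      rw [Finset.sum_eq_single_of_mem y hy]
      · simp
      · intro b _ hb
        rw [if_neg (fun h => hb (hι h))]
    · rw [if_neg h]
      refine Finset.sum_eq_zero ?_
      intro y hy
      rw [if_neg (fun h' => h ⟨y, hy, h'⟩)]

lemma countP_mono {W : Type} {P Q : W → Prop} [DecidablePred P] [DecidablePred Q] {M : Multiset W} (h : ∀ m ∈ M, Q m → P m) :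
    M.countP Q ≤ M.countP P := by
  induction M using Multiset.induction with
  | empty => simp
  | cons c C ih =>
    rw [Multiset.countP_cons, Multiset.countP_cons]
    have h1 := ih (fun m hm => h m (Multiset.mem_cons_of_mem hm))
    have h2 := h c (Multiset.mem_cons_self _ _)
    split_ifs <;> first | omega | tauto

lemma xComp_closed {G : SimpleGraph V} {x : V} {H : (delVert G x).ConnectedComponent} {v w : V}
    (hv : v ∈ xCompSet G x H) (hvx : v ≠ x) (h : G.Adj v w) : w ∈ xCompSet G x H := by
  by_cases hwx : w = x
  · exact Or.inl hwx
  · rcases hv with hv | ⟨v', hv', rfl⟩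
    · exact absurd hv hvx
    · refine Or.inr ⟨⟨w, hwx⟩, ?_, rfl⟩
      rw [ConnectedComponent.mem_supp_iff] at hv' ⊢
      rw [← hv', ConnectedComponent.eq]
      have : (delVert G x).Adj v' ⟨w, hwx⟩ := h
      exact this.reachable.symm

open Classical in
theorem fam_of_defense {W : Type} {G : SimpleGraph V} {x : V} {G' : SimpleGraph W} {x' : W}
    {H : (delVert G' x').ConnectedComponent} (φ : G ≃g G'.induce (xCompSet G' x' H))
    (hφ : (φ x : ↥(xCompSet G' x' H)).1 = x') {k : ℕ} {F : Set (Multiset W)}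
    (hF : IsDefense G' k F) :
    Fam G x {f | ∃ C ∈ F, f = fun v => C.count (φ v).1} := by
  have hinj : Function.Injective (fun v => (φ v).1) :=
    fun u v h => φ.injective (Subtype.ext h)
  have hadj : ∀ u v, G.Adj u v → G'.Adj (φ u).1 (φ v).1 := fun u v h => φ.map_adj_iff.2 h
  refine ⟨?_, ?_, ?_⟩
  · obtain ⟨C, hC⟩ := hF.1
    exact ⟨_, C, hC, rfl⟩
  · rintro f ⟨C, hC, rfl⟩ u v huv
    rcases (hF.2.1 C hC).2 (hadj u v huv) with h | h
    · exact Or.inl (Multiset.one_le_count_iff_mem.2 h)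
    · exact Or.inr (Multiset.one_le_count_iff_mem.2 h)
  · rintro f ⟨C, hC, rfl⟩ Y hxY z hz w hw hzw hcl
    obtain ⟨C', hC', M, hM, hit⟩ := hF.2.2 C hC _ _ (hadj z w hzw)
    refine ⟨_, ⟨C', hC', rfl⟩, ?_⟩
    have hwC : (φ w).1 ∉ C := Multiset.count_eq_zero.1 ((hcl z hz w hzw).resolve_left hw)
    have hfst : ∀ p ∈ M, p.1 ∈ C := fun p hp => hM.1 ▸ Multiset.mem_map_of_mem Prod.fst hp
    have hit' : ((φ z).1, (φ w).1) ∈ M := by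
      rcases hit with h | h
      · exact h
      · exact absurd (hfst _ h) hwC
    simp only
    rw [sum_count hinj, sum_count hinj, ← hM.1, ← hM.2.1, Multiset.countP_map,
      Multiset.countP_map, ← Multiset.countP_eq_card_filter, ← Multiset.countP_eq_card_filter]
    obtain ⟨M0, hM0⟩ := Multiset.exists_cons_of_mem hit'
    rw [hM0, Multiset.countP_cons_of_neg, Multiset.countP_cons_of_pos, Nat.lt_succ_iff]
    · refine countP_mono ?_
      rintro p hp ⟨y, hy, hyp⟩
      have hpM : p ∈ M := hM0 ▸ Multiset.mem_cons_of_mem hp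
      rcases hM.2.2 p hpM with h | h
      · exact ⟨y, hy, hyp.trans h.symm⟩
      · have hyx : (φ y).1 ≠ x' := fun h =>
          hxY (hinj (h.trans hφ.symm) ▸ hy)
        have hyp' : (φ y).1 = p.2 := hyp
        rw [← hyp'] at h
        have hmem := xComp_closed (φ y).2 hyx h.symm
        obtain ⟨u, hu⟩ := φ.surjective ⟨p.1, hmem⟩
        have hu' : (φ u).1 = p.1 := congrArg Subtype.val hu
        have hyu : G.Adj y u := by
          rw [← φ.map_adj_iff]
          change G'.Adj (φ y).1 (φ u).1
          rw [hu']
          exact h.symm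
        rcases hcl y hy u hyu with h1 | h1
        · exact ⟨u, h1, hu'⟩
        · exact absurd (hfst p hpM) (hu' ▸ Multiset.count_eq_zero.1 h1)
    · exact ⟨z, hz, rfl⟩
    · rintro ⟨y, hy, h⟩
      exact hw (hinj h ▸ hy)
/-- Every finite simple connected graph in which each block is a cycle, a
single edge, or a biconnected chordal graph satisfies the substructure property. -/
theorem blocks_substructure (V : Type) [Finite V] (G : SimpleGraph V)
    (hG : G.Connected)
    (hblocks : ∀ S : Set V, IsBlock G S →
      IsCycleSet G S ∨ (∃ u w : V, G.Adj u w ∧ S = {u, w}) ∨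
      (IsChordal (G.induce S) ∧ IsBiconnected (G.induce S))) :
    SubstructureProperty G := by
  classical
  intro x _ V' _ G' x' _ _ H φ hφ C hC
  obtain ⟨k, F, hF, hCF⟩ := hC
  have : Fintype V := Fintype.ofFinite V
  have hfam := fam_of_defense φ hφ hF
  have hinj : Function.Injective (fun v => (φ v).1) :=
    fun u v h => φ.injective (Subtype.ext h)
  have hbr : Branch G x Finset.univ x :=
    ⟨Finset.mem_univ _, fun _ _ _ _ _ => Finset.mem_univ _, fun _ => rfl⟩
  obtain ⟨a, Lo, Hi, hst, hlb⟩ := main_ind hG hblocks hfam _ Finset.univ x rfl hbr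
  have hlb' : ∀ f ∈ {f : V → ℕ | ∃ C ∈ F, f = fun v => C.count (φ v).1},
      a ≤ ∑ v ∈ Finset.univ.erase x, f v := fun f hf =>
    hlb f hf _ (fun v => by simp)
  have h1 := evcOn_le (fun v => Finset.mem_univ v) hst
  have h2 := evc_pendant_le (fun v => Finset.mem_univ v) hst
  have h3 : a + 1 ≤ guardsOn C (xCompSet G' x' H) := by
    have hg : guardsOn C (xCompSet G' x' H) = ∑ v : V, C.count (φ v).1 := by
      rw [sum_count hinj, guardsOn, Multiset.countP_eq_card_filter]
      congr 1
      refine Multiset.filter_congr ?_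
      intro v _
      constructor
      · intro hv
        obtain ⟨u, hu⟩ := φ.surjective ⟨v, hv⟩
        exact ⟨u, Finset.mem_univ _, congrArg Subtype.val hu⟩
      · rintro ⟨u, -, rfl⟩
        exact (φ u).2
    have hmem : (fun v => C.count (φ v).1) ∈
        {f : V → ℕ | ∃ C ∈ F, f = fun v => C.count (φ v).1} := ⟨C, hCF, rfl⟩
    have hsum := Finset.add_sum_erase Finset.univ (fun v => C.count (φ v).1) (Finset.mem_univ x)
    have hl := hlb' _ hmem
    rw [hg]
    by_cases h0 : C.count (φ x).1 = 0
    · obtain ⟨y, hy⟩ := H.nonempty_supp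
      obtain ⟨v, hv⟩ := φ.surjective ⟨y.1, Or.inr ⟨y, hy, rfl⟩⟩
      have hvx : v ≠ x := by
        rintro rfl
        rw [hv] at hφ
        exact y.2 hφ
      obtain ⟨z, -, hzx, hadj⟩ := hbr.nbr hG (Finset.mem_univ v) hvx
      obtain ⟨f', hf', hlt⟩ := hfam.out _ hmem (Finset.univ.erase x) (Finset.notMem_erase _ _) z
        (Finset.mem_erase.2 ⟨hzx, Finset.mem_univ _⟩) x (Finset.notMem_erase _ _) hadj (by
          intro _ _ u _
          by_cases hu : u = x
          · exact Or.inr (hu ▸ h0)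
          · exact Or.inl (Finset.mem_erase.2 ⟨hu, Finset.mem_univ _⟩))
      have := hlb' f' hf'
      beta_reduce at hsum hlt
      omega
    · beta_reduce at hsum hl
      omega
  constructor
  · intro _
    omega
  · intro _
    omega

end EVC
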